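/- arXiv:2207.00194 — 3 statements merged into one kernel-verified Lean document; each statement's English description precedes it below -/
import Mathlib

section
/- Let {E_j}_{j=1}^m be a finite set of distinct points in (-2,2) and let {θ_j}_{j=1}^m ⊂ [0,π). Then there exists a potential V : ℕ → ℝ and a constant C > 0 with |V(n)| ≤ C/(1+n) for all n, such that for every j = 1,…,m the eigen-equation u(n+1) + u(n-1) + V(n)u(n) = E_j·u(n) (n ≥ 1) has a nonzero solution u ∈ ℓ²(ℕ) satisfying the boundary condition u(1)·cos(θ_j) = u(0)·sin(θ_j). -/
open Filter Topology

/-- The one-step transfer matrix of `u (n + 1) + u (n - 1) + v * u n = e * u n`, acting on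
column vectors `(u n, u (n - 1))`. -/
def transferMatrix (e v : ℝ) : Matrix (Fin 2) (Fin 2) ℝ := !![e - v, -1; 1, 0]

/-- The matrices transporting solutions at all energies `E j` simultaneously. -/
def transferMonoid {ι : Type*} (E : ι → ℝ) : Submonoid (ι → Matrix (Fin 2) (Fin 2) ℝ) :=
  Submonoid.closure (Set.range fun v j => transferMatrix (E j) v)

/-- A family of upper unipotent matrices. -/
def upperUnip {ι : Type*} (f : ι → ℝ) (j : ι) : Matrix (Fin 2) (Fin 2) ℝ := !![1, f j; 0, 1]

/-- A family of lower unipotent matrices. -/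
def lowerUnip {ι : Type*} (f : ι → ℝ) (j : ι) : Matrix (Fin 2) (Fin 2) ℝ := !![1, 0; f j, 1]

theorem exists_angle {e : ℝ} (he : e ∈ Set.Ioo (-2 : ℝ) 2) :
    ∃ k : ℝ, 0 < k ∧ k < Real.pi ∧ e = 2 * Real.cos k := by
  refine ⟨Real.arccos (e / 2), Real.arccos_pos.2 (by linarith [he.2]),
    Real.arccos_lt_pi.2 (by linarith [he.1]), ?_⟩
  rw [Real.cos_arccos (by linarith [he.1]) (by linarith [he.2])]
  ring

section Density

variable {ι : Type*} {E : ι → ℝ}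

theorem transferMatrix_mem_closure (v : ℝ) :
    (fun j => transferMatrix (E j) v) ∈ (transferMonoid E).topologicalClosure :=
  Submonoid.le_topologicalClosure _ (Submonoid.subset_closure ⟨v, rfl⟩)

theorem transferMatrix_inv_mem_closure (hE : ∀ j, E j ∈ Set.Ioo (-2 : ℝ) 2) :
    (fun j => !![0, 1; -1, E j]) ∈ (transferMonoid E).topologicalClosure := by
  choose k hk0 hkπ hkE using fun j => exists_angle (hE j)
  have hs : ∀ j, Real.sin (k j) ≠ 0 := fun j => (Real.sin_pos_of_pos_of_lt_pi (hk0 j) (hkπ j)).ne'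
  let φ : (ι → Circle) → ι → Matrix (Fin 2) (Fin 2) ℝ := fun z j =>
    !![((z j : ℂ).im / Real.sin (k j)) * E j
        + ((z j : ℂ).re - Real.cos (k j) / Real.sin (k j) * (z j : ℂ).im),
      -((z j : ℂ).im / Real.sin (k j));
      (z j : ℂ).im / Real.sin (k j),
      (z j : ℂ).re - Real.cos (k j) / Real.sin (k j) * (z j : ℂ).im]
  have hφ : Continuous φ := by
    refine continuous_pi fun j => continuous_matrix fun a b => ?_
    have : Continuous fun z : ι → Circle => (z j : ℂ) := by fun_prop
    have h1 : Continuous fun z : ι → Circle => (z j : ℂ).im := Complex.continuous_im.comp this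
    have h2 : Continuous fun z : ι → Circle => (z j : ℂ).re := Complex.continuous_re.comp this
    fin_cases a <;> fin_cases b <;> simp [φ] <;> fun_prop
  let z : ι → Circle := fun j => Circle.exp (k j)
  have hz : ∀ j, (z j : ℂ) = Real.cos (k j) + Real.sin (k j) * Complex.I := fun j => by
    simp [z, Circle.coe_exp, Complex.exp_mul_I]
  have hzre : ∀ j, (z j : ℂ).re = Real.cos (k j) := fun j => by
    simp [hz, -Complex.ofReal_cos, -Complex.ofReal_sin]
  have hzim : ∀ j, (z j : ℂ).im = Real.sin (k j) := fun j => by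
    simp [hz, -Complex.ofReal_cos, -Complex.ofReal_sin]
  have hpow : ∀ n : ℕ, φ (z ^ n) = (fun j => transferMatrix (E j) 0) ^ n := by
    intro n
    induction n with
    | zero =>
      ext j a b
      fin_cases a <;> fin_cases b <;> simp [φ]
    | succ n ih =>
      rw [pow_succ, pow_succ, ← ih]
      ext j a b
      have := hs j
      have h1 := Real.sin_sq_add_cos_sq (k j)
      generalize z ^ n = y at *
      fin_cases a <;> fin_cases b <;>
        simp [φ, transferMatrix, Matrix.mul_apply, hzre, hzim, hkE] <;> field_simp <;> grind
  have hinv : φ z⁻¹ = fun j => !![0, 1; -1, E j] := by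
    ext j a b
    have := hs j
    fin_cases a <;> fin_cases b <;> simp [φ, hzre, hzim, hkE] <;> field_simp <;> ring
  have hc : MapClusterPt z⁻¹ atTop (z ^ · : ℕ → ι → Circle) :=
    mapClusterPt_inv_atTop_pow.2 (mapClusterPt_self_atTop_pow z)
  have hc' := hc.continuousAt_comp hφ.continuousAt
  rw [hinv] at hc'
  refine (Submonoid.isClosed_topologicalClosure (transferMonoid E)).mem_of_mapClusterPt hc'
    (Eventually.of_forall fun n => ?_)
  simp only [Function.comp, hpow]
  exact pow_mem (transferMatrix_mem_closure 0) n

theorem upperUnip_const_mem_closure (hE : ∀ j, E j ∈ Set.Ioo (-2 : ℝ) 2) (v : ℝ) :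
    upperUnip (fun _ => v) ∈ (transferMonoid E).topologicalClosure := by
  convert mul_mem (transferMatrix_mem_closure (-v)) (transferMatrix_inv_mem_closure hE) using 1
  ext j a b
  fin_cases a <;> fin_cases b <;> simp [upperUnip, transferMatrix]

theorem lowerUnip_const_mem_closure (hE : ∀ j, E j ∈ Set.Ioo (-2 : ℝ) 2) (v : ℝ) :
    lowerUnip (fun _ => v) ∈ (transferMonoid E).topologicalClosure := by
  convert mul_mem (transferMatrix_inv_mem_closure hE) (transferMatrix_mem_closure v) using 1
  ext j a b
  fin_cases a <;> fin_cases b <;> simp [lowerUnip, transferMatrix]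

theorem diag_const_mem_closure (hE : ∀ j, E j ∈ Set.Ioo (-2 : ℝ) 2) {a : ℝ} (ha : a ≠ 0) :
    (fun _ => !![a, 0; 0, a⁻¹]) ∈ (transferMonoid E).topologicalClosure := by
  have hU := upperUnip_const_mem_closure hE
  have hL := lowerUnip_const_mem_closure hE
  convert mul_mem (mul_mem (mul_mem (hU (-a)) (hL a⁻¹)) (hU (-a)))
    (mul_mem (mul_mem (hU 1) (hL (-1))) (hU 1)) using 1
  ext j b c
  fin_cases b <;> fin_cases c <;> simp [upperUnip, lowerUnip, ha]

/-- The Weyl element and its inverse. -/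
theorem weyl_mem_closure (hE : ∀ j, E j ∈ Set.Ioo (-2 : ℝ) 2) :
    (fun _ => !![0, -1; 1, 0]) ∈ (transferMonoid E).topologicalClosure ∧
    (fun _ => !![0, 1; -1, 0]) ∈ (transferMonoid E).topologicalClosure := by
  have hU := upperUnip_const_mem_closure hE
  have hL := lowerUnip_const_mem_closure hE
  constructor
  · convert mul_mem (mul_mem (hU (-1)) (hL 1)) (hU (-1)) using 1
    ext j b c
    fin_cases b <;> fin_cases c <;> simp [upperUnip, lowerUnip]
  · convert mul_mem (mul_mem (hU 1) (hL (-1))) (hU 1) using 1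
    ext j b c
    fin_cases b <;> fin_cases c <;> simp [upperUnip, lowerUnip]

theorem upperUnip_sq_mem_closure (hE : ∀ j, E j ∈ Set.Ioo (-2 : ℝ) 2) {f : ι → ℝ}
    (hf : upperUnip f ∈ (transferMonoid E).topologicalClosure)
    (hf' : upperUnip (-f) ∈ (transferMonoid E).topologicalClosure) (t : ℝ) :
    upperUnip (t • (f * f)) ∈ (transferMonoid E).topologicalClosure := by
  let h : ℝ → ι → Matrix (Fin 2) (Fin 2) ℝ := fun x j =>
    !![1 - f j * t * x ^ 2, t * (f j * f j); - t * x ^ 4, 1 + f j * t * x ^ 2]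
  have hcont : Continuous h := by
    refine continuous_pi fun j => continuous_matrix fun a b => ?_
    fin_cases a <;> fin_cases b <;> simp [h] <;> fun_prop
  have hlim := (hcont.tendsto 0).comp (tendsto_one_div_add_atTop_nhds_zero_nat (𝕜 := ℝ))
  have h0 : h 0 = upperUnip (t • (f * f)) := by
    ext j a b
    fin_cases a <;> fin_cases b <;> simp [upperUnip, h]
  rw [h0] at hlim
  refine (Submonoid.isClosed_topologicalClosure (transferMonoid E)).mem_of_tendsto hlim
    (Eventually.of_forall fun n => ?_)
  have hx : (1 / ((n : ℝ) + 1)) ≠ 0 := by positivity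
  simp only [Function.comp]
  generalize (1 / ((n : ℝ) + 1)) = x at hx
  have hmem := mul_mem (mul_mem (diag_const_mem_closure hE (inv_ne_zero hx))
    (mul_mem (mul_mem hf (lowerUnip_const_mem_closure hE (-t * x ^ 2))) hf'))
    (diag_const_mem_closure hE hx)
  refine (congrArg (· ∈ (transferMonoid E).topologicalClosure) ?_).mpr hmem
  ext j a b
  fin_cases a <;> fin_cases b <;> simp [upperUnip, lowerUnip, h] <;> field_simp <;> ring

theorem upperUnip_mem_closure [Fintype ι] (hE : ∀ j, E j ∈ Set.Ioo (-2 : ℝ) 2)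
    (hEinj : Function.Injective E) (f : ι → ℝ) :
    upperUnip f ∈ (transferMonoid E).topologicalClosure := by
  classical
  have hadd : ∀ f g : ι → ℝ, upperUnip (f + g) = upperUnip f * upperUnip g := by
    intro f g
    ext j a b
    fin_cases a <;> fin_cases b <;> simp [upperUnip, add_comm]
  let P : (ι → ℝ) → Prop := fun f => ∀ t : ℝ,
    upperUnip (t • f) ∈ (transferMonoid E).topologicalClosure
  have Padd : ∀ f g, P f → P g → P (f + g) := fun f g hf hg t => by
    rw [smul_add, hadd]; exact mul_mem (hf t) (hg t)
  have Psmul : ∀ (s : ℝ) f, P f → P (s • f) := fun s f hf t => by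
    rw [smul_smul]; exact hf _
  have Psq : ∀ f, P f → P (f * f) := fun f hf =>
    upperUnip_sq_mem_closure hE (by simpa using hf 1) (by simpa using hf (-1))
  have Pmul : ∀ f g, P f → P g → P (f * g) := fun f g hf hg => by
    have h := Padd _ _ (Psmul (1 / 2) _ (Psq _ (Padd f g hf hg)))
      (Padd _ _ (Psmul (-1 / 2) _ (Psq _ hf)) (Psmul (-1 / 2) _ (Psq _ hg)))
    convert h using 1
    ext j
    simp
    ring
  have Pconst : ∀ c : ℝ, P (fun _ => c) := fun c t =>
    upperUnip_const_mem_closure hE (t * c)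
  obtain ⟨hw, hw'⟩ := weyl_mem_closure hE
  have hUE : upperUnip E ∈ (transferMonoid E).topologicalClosure := by
    convert mul_mem (transferMatrix_mem_closure 0) hw' using 1
    ext j a b
    fin_cases a <;> fin_cases b <;> simp [upperUnip, transferMatrix]
  have hUE' : upperUnip (-E) ∈ (transferMonoid E).topologicalClosure := by
    convert mul_mem hw (transferMatrix_inv_mem_closure hE) using 1
    ext j a b
    fin_cases a <;> fin_cases b <;> simp [upperUnip]
  have PE : P E := by
    have key : ∀ c : ℝ, c = 1 ∨ c = -1 → ∀ s : ℝ, s ≠ 0 →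
        upperUnip ((c * (s * s)) • E) ∈ (transferMonoid E).topologicalClosure := by
      intro c hc s hs
      have hcE : upperUnip (c • E) ∈ (transferMonoid E).topologicalClosure := by
        rcases hc with rfl | rfl
        · simpa using hUE
        · simpa using hUE'
      convert mul_mem (mul_mem (diag_const_mem_closure hE hs) hcE)
        (diag_const_mem_closure hE (inv_ne_zero hs)) using 1
      ext j a b
      fin_cases a <;> fin_cases b <;> simp [upperUnip] <;> field_simp
    intro t
    rcases lt_trichotomy t 0 with h | rfl | h
    · have := key (-1) (Or.inr rfl) (Real.sqrt (-t)) (Real.sqrt_pos.2 (by linarith)).ne'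
      rwa [Real.mul_self_sqrt (by linarith), neg_one_mul, neg_neg] at this
    · rw [zero_smul]
      exact upperUnip_const_mem_closure hE 0
    · have := key 1 (Or.inl rfl) (Real.sqrt t) (Real.sqrt_pos.2 h).ne'
      rwa [Real.mul_self_sqrt h.le, one_mul] at this
  have Ppoly : ∀ p : Polynomial ℝ, P (fun j => p.eval (E j)) := by
    intro p
    induction p using Polynomial.induction_on with
    | C a => simpa using Pconst a
    | add p q hp hq =>
      simp only [Polynomial.eval_add]
      exact Padd _ _ hp hq
    | monomial n a h =>
      convert Pmul _ _ h PE using 1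
      ext j
      simp [pow_succ, mul_assoc]
  have hp := Ppoly (Lagrange.interpolate Finset.univ E f) 1
  simpa only [one_smul, Lagrange.eval_interpolate_at_node f hEinj.injOn (Finset.mem_univ _)]
    using hp

theorem lowerUnip_mem_closure [Fintype ι] (hE : ∀ j, E j ∈ Set.Ioo (-2 : ℝ) 2)
    (hEinj : Function.Injective E) (f : ι → ℝ) :
    lowerUnip f ∈ (transferMonoid E).topologicalClosure := by
  obtain ⟨hw, hw'⟩ := weyl_mem_closure hE
  convert mul_mem (mul_mem hw (upperUnip_mem_closure hE hEinj (-f))) hw' using 1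
  ext j a b
  fin_cases a <;> fin_cases b <;> simp [upperUnip, lowerUnip]

/-- The transfer matrices at finitely many distinct energies in `(-2, 2)` generate a dense
subsemigroup of the product of the groups `SL(2, ℝ)`. -/
theorem mem_closure_transferMonoid [Fintype ι] (hE : ∀ j, E j ∈ Set.Ioo (-2 : ℝ) 2)
    (hEinj : Function.Injective E) {g : ι → Matrix (Fin 2) (Fin 2) ℝ}
    (hg : ∀ j, (g j).det = 1) : g ∈ (transferMonoid E).topologicalClosure := by
  have hU := upperUnip_mem_closure hE hEinj
  have hL := lowerUnip_mem_closure hE hEinj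
  have h1 : ∀ g : ι → Matrix (Fin 2) (Fin 2) ℝ, (∀ j, (g j).det = 1) → (∀ j, g j 1 0 ≠ 0) →
      g ∈ (transferMonoid E).topologicalClosure := by
    intro g hg hc
    convert mul_mem (mul_mem (hU fun j => (g j 0 0 - 1) / g j 1 0) (hL fun j => g j 1 0))
      (hU fun j => (g j 1 1 - 1) / g j 1 0) using 1
    ext j a b
    have h2 := hg j
    have h3 := hc j
    rw [Matrix.det_fin_two] at h2
    fin_cases a <;> fin_cases b <;> simp [upperUnip, lowerUnip] <;> field_simp <;> grind
  let f : ι → ℝ := fun j => if g j 1 0 = 0 then 1 else 0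
  have h2 : g = (g * lowerUnip f) * lowerUnip (-f) := by
    ext j a b
    fin_cases a <;> fin_cases b <;> simp [lowerUnip, Matrix.mul_apply]
  rw [h2]
  refine mul_mem (h1 _ (fun j => ?_) fun j => ?_) (hL _)
  · simp [Matrix.det_mul, hg j, lowerUnip]
  · have h3 := hg j
    rw [Matrix.det_fin_two] at h3
    by_cases h4 : g j 1 0 = 0
    · simp [lowerUnip, Matrix.mul_apply, f, h4]
      intro h5
      simp [h4, h5] at h3
    · simp [lowerUnip, Matrix.mul_apply, f, h4]

end Density

section Transitivity

theorem sq_add_sq_ne_zero_of_ne_zero {w : Fin 2 → ℝ} (hw : w ≠ 0) : w 0 ^ 2 + w 1 ^ 2 ≠ 0 := by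
  intro h0
  refine hw (funext fun i => ?_)
  fin_cases i <;> simp <;> nlinarith [sq_nonneg (w 0), sq_nonneg (w 1)]

variable {ι : Type*} {E : ι → ℝ}

/-- The componentwise action of a family of matrices on a family of vectors. -/
noncomputable def familyAct (g : ι → Matrix (Fin 2) (Fin 2) ℝ) :
    (ι → Fin 2 → ℝ) →L[ℝ] (ι → Fin 2 → ℝ) :=
  ContinuousLinearMap.pi fun j =>
    (Matrix.toLin' (g j)).toContinuousLinearMap.comp (ContinuousLinearMap.proj j)

theorem familyAct_apply (g : ι → Matrix (Fin 2) (Fin 2) ℝ) (z : ι → Fin 2 → ℝ) (j : ι) :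
    familyAct g z j = (g j).mulVec (z j) := rfl

@[simp]
theorem familyAct_apply_apply (g : ι → Matrix (Fin 2) (Fin 2) ℝ) (z : ι → Fin 2 → ℝ) (j : ι)
    (i : Fin 2) : familyAct g z j i = g j i 0 * z j 0 + g j i 1 * z j 1 := by
  simp [familyAct_apply, Matrix.mulVec_eq_sum, Fin.sum_univ_two, mul_comm]

theorem familyAct_mul (g h : ι → Matrix (Fin 2) (Fin 2) ℝ) (z : ι → Fin 2 → ℝ) :
    familyAct (g * h) z = familyAct g (familyAct h z) := by
  ext j : 1
  simp only [familyAct_apply, Pi.mul_apply, Matrix.mulVec_mulVec]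

theorem familyAct_one (z : ι → Fin 2 → ℝ) : familyAct 1 z = z := by
  ext j : 1
  simp only [familyAct_apply, Pi.one_apply, Matrix.one_mulVec]

theorem familyAct_adjugate_left {g : ι → Matrix (Fin 2) (Fin 2) ℝ} (hg : ∀ j, (g j).det = 1)
    (z : ι → Fin 2 → ℝ) : familyAct (fun j => (g j).adjugate) (familyAct g z) = z := by
  ext j : 1
  simp only [familyAct_apply, Matrix.mulVec_mulVec, Matrix.adjugate_mul, hg j, one_smul,
    Matrix.one_mulVec]

theorem familyAct_adjugate_right {g : ι → Matrix (Fin 2) (Fin 2) ℝ} (hg : ∀ j, (g j).det = 1)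
    (z : ι → Fin 2 → ℝ) : familyAct g (familyAct (fun j => (g j).adjugate) z) = z := by
  ext j : 1
  simp only [familyAct_apply, Matrix.mulVec_mulVec, Matrix.mul_adjugate, hg j, one_smul,
    Matrix.one_mulVec]

theorem det_eq_one_of_mem_transferMonoid {g : ι → Matrix (Fin 2) (Fin 2) ℝ}
    (hg : g ∈ transferMonoid E) (j : ι) : (g j).det = 1 := by
  induction hg using Submonoid.closure_induction with
  | mem g hg =>
    obtain ⟨v, rfl⟩ := hg
    simp [transferMatrix]
  | one => simp
  | mul g h _ _ ihg ihh => simp [ihg, ihh]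

/-- `z` is reached from `x` by a product of transfer matrices, and the differential of the
endpoint with respect to the potential has range `D` there. -/
def ReachesWithTangent (E : ι → ℝ) (x z : ι → Fin 2 → ℝ)
    (D : Submodule ℝ (ι → Fin 2 → ℝ)) [Fintype ι] : Prop :=
  ∃ (L : ℕ) (F : (Fin L → ℝ) → ι → Fin 2 → ℝ) (F' : (Fin L → ℝ) →L[ℝ] (ι → Fin 2 → ℝ))
    (p : Fin L → ℝ), HasStrictFDerivAt F F' p ∧ F p = z ∧ F'.range = D ∧
      ∀ q, ∃ g ∈ transferMonoid E, F q = familyAct g x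

/-- The projection of every component to its first coordinate. -/
noncomputable def fstProj : (ι → Fin 2 → ℝ) →L[ℝ] (ι → Fin 2 → ℝ) :=
  familyAct fun _ => !![1, 0; 0, 0]

theorem familyAct_transferMatrix (v : ℝ) (z : ι → Fin 2 → ℝ) :
    familyAct (fun j => transferMatrix (E j) v) z =
      familyAct (fun j => transferMatrix (E j) 0) z - v • fstProj z := by
  ext j i
  fin_cases i <;> simp [transferMatrix, fstProj]
  ring

theorem continuous_familyAct {X : Type*} [TopologicalSpace X]
    {g : X → ι → Matrix (Fin 2) (Fin 2) ℝ} {z : X → ι → Fin 2 → ℝ} (hg : Continuous g)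
    (hz : Continuous z) : Continuous fun t => familyAct (g t) (z t) :=
  continuous_pi fun j => ((continuous_apply j).comp hg).matrix_mulVec ((continuous_apply j).comp hz)

theorem continuous_family_adjugate :
    Continuous fun (g : ι → Matrix (Fin 2) (Fin 2) ℝ) j => (g j).adjugate :=
  continuous_pi fun j => (continuous_apply j).matrix_adjugate

variable [Fintype ι]

theorem ReachesWithTangent.refl (x : ι → Fin 2 → ℝ) : ReachesWithTangent E x x ⊥ :=
  ⟨0, fun _ => x, 0, 0, hasStrictFDerivAt_const x 0, rfl, by ext; simp,
    fun _ => ⟨1, one_mem _, (familyAct_one x).symm⟩⟩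

theorem ReachesWithTangent.step {x z : ι → Fin 2 → ℝ} {D : Submodule ℝ (ι → Fin 2 → ℝ)}
    (h : ReachesWithTangent E x z D) (v : ℝ) :
    ∃ D', ReachesWithTangent E x (familyAct (fun j => transferMatrix (E j) v) z) D' ∧
      D.map (familyAct fun j => transferMatrix (E j) v).toLinearMap ≤ D' ∧ fstProj z ∈ D' := by
  obtain ⟨L, F, F', p, hF, rfl, rfl, hreach⟩ := h
  let front : (Fin (L + 1) → ℝ) →L[ℝ] (Fin L → ℝ) :=
    ContinuousLinearMap.pi fun i => ContinuousLinearMap.proj i.castSucc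
  let last : (Fin (L + 1) → ℝ) →L[ℝ] ℝ := ContinuousLinearMap.proj (Fin.last L)
  let F₂ : (Fin (L + 1) → ℝ) → ι → Fin 2 → ℝ := fun q =>
    familyAct (fun j => transferMatrix (E j) (last q)) (F (front q))
  let q₀ : Fin (L + 1) → ℝ := Fin.snoc p v
  have hfront : ∀ q : Fin L → ℝ, ∀ s : ℝ,
      front (Fin.snoc q s : Fin (L + 1) → ℝ) = q := fun q s => by
    ext i
    simp [front]
  have hlast : ∀ q : Fin L → ℝ, ∀ s : ℝ,
      last (Fin.snoc q s : Fin (L + 1) → ℝ) = s := fun q s => by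
    simp [last]
  have hFi : HasStrictFDerivAt (fun q => F (front q)) (F'.comp front) q₀ := by
    refine HasStrictFDerivAt.comp q₀ (g := F) ?_ front.hasStrictFDerivAt
    rwa [hfront]
  have hF₂ : HasStrictFDerivAt F₂
      ((familyAct fun j => transferMatrix (E j) 0).comp (F'.comp front) -
        (last q₀ • fstProj.comp (F'.comp front) + last.smulRight (fstProj (F (front q₀))))) q₀ := by
    have e : F₂ = fun q => familyAct (fun j => transferMatrix (E j) 0) (F (front q)) -
        last q • fstProj (F (front q)) := by
      ext1 q
      exact familyAct_transferMatrix _ _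
    rw [e]
    exact ((ContinuousLinearMap.hasStrictFDerivAt _).comp q₀ hFi).sub
      (last.hasStrictFDerivAt.smul
        ((ContinuousLinearMap.hasStrictFDerivAt (fstProj (ι := ι))).comp q₀ hFi))
  refine ⟨_, ⟨L + 1, F₂, _, q₀, hF₂, ?_, rfl, fun q => ?_⟩, ?_, ?_⟩
  · simp only [F₂, q₀, hfront, hlast]
  · obtain ⟨g, hg, h⟩ := hreach (front q)
    exact ⟨_, mul_mem (Submonoid.subset_closure ⟨last q, rfl⟩) hg, by
      rw [familyAct_mul, ← h]⟩
  · rintro _ ⟨_, ⟨d, rfl⟩, rfl⟩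
    refine ⟨Fin.snoc d 0, ?_⟩
    simp [q₀, hfront, hlast, familyAct_transferMatrix v]
  · refine ⟨Fin.snoc 0 (-1), ?_⟩
    simp [q₀, hfront, hlast]

theorem ReachesWithTangent.trans {x z : ι → Fin 2 → ℝ} {D : Submodule ℝ (ι → Fin 2 → ℝ)}
    (h : ReachesWithTangent E x z D) {g : ι → Matrix (Fin 2) (Fin 2) ℝ}
    (hg : g ∈ transferMonoid E) :
    ∃ D', ReachesWithTangent E x (familyAct g z) D' ∧ D.map (familyAct g).toLinearMap ≤ D' := by
  induction hg using Submonoid.closure_induction generalizing z D with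
  | mem g hg =>
    obtain ⟨v, rfl⟩ := hg
    obtain ⟨D', h1, h2, -⟩ := h.step v
    exact ⟨D', h1, h2⟩
  | one =>
    refine ⟨D, by rwa [familyAct_one], ?_⟩
    rintro _ ⟨d, hd, rfl⟩
    simpa [familyAct_one] using hd
  | mul a b _ _ iha ihb =>
    obtain ⟨D₁, h₁, hD₁⟩ := ihb h
    obtain ⟨D₂, h₂, hD₂⟩ := iha h₁
    refine ⟨D₂, by rwa [familyAct_mul], ?_⟩
    rintro _ ⟨d, hd, rfl⟩
    have := hD₂ ⟨_, hD₁ ⟨d, hd, rfl⟩, rfl⟩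
    simpa [familyAct_mul] using this

theorem ReachesWithTangent.exists_maximal (E : ι → ℝ) (x : ι → Fin 2 → ℝ) :
    ∃ z D, ReachesWithTangent E x z D ∧ ∀ z' D', ReachesWithTangent E x z' D' →
      Module.finrank ℝ D' ≤ Module.finrank ℝ D := by
  let A : Set ℕ := {n | ∃ z D, ReachesWithTangent E x z D ∧ Module.finrank ℝ D = n}
  have hne : A.Nonempty := ⟨_, x, ⊥, .refl x, rfl⟩
  have hbdd : BddAbove A := by
    refine ⟨Module.finrank ℝ (ι → Fin 2 → ℝ), ?_⟩
    rintro _ ⟨z, D, -, rfl⟩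
    exact D.finrank_le
  obtain ⟨z, D, h, hD⟩ := Nat.sSup_mem hne hbdd
  exact ⟨z, D, h, fun z' D' h' => hD ▸ le_csSup hbdd ⟨z', D', h', rfl⟩⟩

omit [Fintype ι] in
theorem finrank_map_familyAct {g : ι → Matrix (Fin 2) (Fin 2) ℝ} (hg : ∀ j, (g j).det = 1)
    (D : Submodule ℝ (ι → Fin 2 → ℝ)) :
    Module.finrank ℝ (D.map (familyAct g).toLinearMap) = Module.finrank ℝ D :=
  (Submodule.equivMapOfInjective _
    (Function.LeftInverse.injective (familyAct_adjugate_left hg)) D).finrank_eq.symm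

/-- At a point of maximal rank every tangent direction is attained. -/
theorem ReachesWithTangent.eq_top_of_maximal (hE : ∀ j, E j ∈ Set.Ioo (-2 : ℝ) 2)
    (hEinj : Function.Injective E) {x z : ι → Fin 2 → ℝ} {D : Submodule ℝ (ι → Fin 2 → ℝ)}
    (h : ReachesWithTangent E x z D) (hz : ∀ j, z j ≠ 0)
    (hmax : ∀ z' D', ReachesWithTangent E x z' D' → Module.finrank ℝ D' ≤ Module.finrank ℝ D) :
    D = ⊤ := by
  classical
  let N : ι → Matrix (Fin 2) (Fin 2) ℝ := fun _ => !![0, 0; 1, 0]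
  let Φ : (ι → Matrix (Fin 2) (Fin 2) ℝ) → ι → Fin 2 → ℝ := fun g =>
    familyAct (fun j => (g j).adjugate) (familyAct N (familyAct g z))
  have hΦ : Continuous Φ := continuous_familyAct continuous_family_adjugate
    ((familyAct N).continuous.comp (continuous_familyAct continuous_id continuous_const))
  have hmem : ∀ g ∈ transferMonoid E, Φ g ∈ D := by
    intro g hg
    obtain ⟨D₁, h₁, hD₁⟩ := h.trans hg
    obtain ⟨D₂, h₂, hD₂, hf⟩ := h₁.step 0
    have ht : (fun j => transferMatrix (E j) 0) ∈ transferMonoid E :=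
      Submonoid.subset_closure ⟨0, rfl⟩
    have hle : D.map (familyAct ((fun j => transferMatrix (E j) 0) * g)).toLinearMap ≤ D₂ := by
      rintro _ ⟨d, hd, rfl⟩
      have := hD₂ ⟨_, hD₁ ⟨d, hd, rfl⟩, rfl⟩
      simpa [familyAct_mul] using this
    have heq := Submodule.eq_of_le_of_finrank_le hle (by
      rw [finrank_map_familyAct (det_eq_one_of_mem_transferMonoid (mul_mem ht hg))]
      exact hmax _ _ h₂)
    rw [← heq] at hf
    obtain ⟨d, hd, hd'⟩ := hf
    have hdd : Φ g = - d := by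
      rw [← familyAct_adjugate_left (det_eq_one_of_mem_transferMonoid hg) (-d)]
      refine congrArg (familyAct _) ?_
      have h1 := congrArg (familyAct fun j => (transferMatrix (E j) 0).adjugate) hd'
      simp only [ContinuousLinearMap.coe_coe, familyAct_mul] at h1
      rw [familyAct_adjugate_left (det_eq_one_of_mem_transferMonoid ht)] at h1
      rw [map_neg, h1]
      ext j i
      fin_cases i <;> simp [N, fstProj, transferMatrix, Matrix.adjugate_fin_two]
    rw [hdd]
    exact D.neg_mem hd
  have hclosed : IsClosed {g | Φ g ∈ D} := D.closed_of_finiteDimensional.preimage hΦ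
  have hall : ∀ g : ι → Matrix (Fin 2) (Fin 2) ℝ, (∀ j, (g j).det = 1) → Φ g ∈ D := fun g hg =>
    closure_minimal (fun g hg => hmem g hg) hclosed (mem_closure_transferMonoid hE hEinj hg)
  have hw : ∀ w : ι → Fin 2 → ℝ, (∀ j, w j ≠ 0) →
      (fun j => (w j 1 * z j 0 - w j 0 * z j 1) • w j) ∈ D := by
    intro w hw
    have h1 := hall (fun j => !![w j 1, - w j 0; w j 0 / (w j 0 ^ 2 + w j 1 ^ 2),
      w j 1 / (w j 0 ^ 2 + w j 1 ^ 2)]) (fun j => by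
        have := sq_add_sq_ne_zero_of_ne_zero (hw j)
        simp [Matrix.det_fin_two]
        field_simp
        ring)
    convert h1 using 1
    ext j i
    fin_cases i <;> simp [Φ, N, Matrix.adjugate_fin_two] <;> ring
  have hsingle : ∀ j (w : Fin 2 → ℝ), w 1 * z j 0 - w 0 * z j 1 ≠ 0 → Pi.single j w ∈ D := by
    intro j w hc
    have h1 := hw (Function.update z j w) (fun i => by
      rcases eq_or_ne i j with rfl | hij
      · rw [Function.update_self]
        rintro rfl
        simp at hc
      · rw [Function.update_of_ne hij]
        exact hz i)
    have h2 : (fun i => (Function.update z j w i 1 * z i 0 - Function.update z j w i 0 * z i 1) •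
        Function.update z j w i) = (w 1 * z j 0 - w 0 * z j 1) • Pi.single j w := by
      ext i : 1
      rcases eq_or_ne i j with rfl | hij
      · simp
      · simp [hij, mul_comm]
    rw [h2] at h1
    exact (D.smul_mem_iff hc).1 h1
  have hsingle' : ∀ j (w : Fin 2 → ℝ), Pi.single j w ∈ D := by
    intro j w
    by_cases hc : w 1 * z j 0 - w 0 * z j 1 = 0
    · have hzj := sq_add_sq_ne_zero_of_ne_zero (hz j)
      have h1 := hsingle j ![-z j 1, z j 0] (by simpa [pow_two] using hzj)
      have h2 := hsingle j (w + ![-z j 1, z j 0]) (by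
        simp
        intro h
        apply hzj
        linear_combination h - hc)
      rw [Pi.single_add] at h2
      simpa using D.sub_mem h2 h1
    · exact hsingle j w hc
  refine Submodule.eq_top_iff'.2 fun y => ?_
  rw [← Finset.univ_sum_single y]
  exact D.sum_mem fun j _ => hsingle' j _

theorem exists_det_eq_one_mulVec_eq {x y : Fin 2 → ℝ} (hx : x ≠ 0) (hy : y ≠ 0) :
    ∃ g : Matrix (Fin 2) (Fin 2) ℝ, g.det = 1 ∧ g.mulVec x = y := by
  have h1 := sq_add_sq_ne_zero_of_ne_zero hx
  have h2 := sq_add_sq_ne_zero_of_ne_zero hy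
  let a := (x 0 ^ 2 + x 1 ^ 2)⁻¹
  let b := (y 0 ^ 2 + y 1 ^ 2)⁻¹
  have ha : a * (x 0 ^ 2 + x 1 ^ 2) = 1 := inv_mul_cancel₀ h1
  have hb : b * (y 0 ^ 2 + y 1 ^ 2) = 1 := inv_mul_cancel₀ h2
  refine ⟨!![a * y 0 * x 0 + b * y 1 * x 1, a * y 0 * x 1 - b * y 1 * x 0;
    a * y 1 * x 0 - b * y 0 * x 1, a * y 1 * x 1 + b * y 0 * x 0], ?_, ?_⟩
  · rw [Matrix.det_fin_two]
    simp
    linear_combination ha * (b * (y 0 ^ 2 + y 1 ^ 2)) + hb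
  · ext i
    fin_cases i <;> simp [Matrix.mulVec_eq_sum, Fin.sum_univ_two]
    · linear_combination y 0 * ha
    · linear_combination y 1 * ha

/-- The transfer matrices at finitely many distinct energies in `(-2, 2)` act transitively on
families of nonzero vectors. -/
theorem exists_mem_transferMonoid_familyAct_eq (hE : ∀ j, E j ∈ Set.Ioo (-2 : ℝ) 2)
    (hEinj : Function.Injective E) {x y : ι → Fin 2 → ℝ} (hx : ∀ j, x j ≠ 0)
    (hy : ∀ j, y j ≠ 0) : ∃ g ∈ transferMonoid E, familyAct g x = y := by
  obtain ⟨z, D, h, hmax⟩ := ReachesWithTangent.exists_maximal E x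
  have hz : ∀ j, z j ≠ 0 := by
    obtain ⟨L, F, F', p, -, rfl, -, hreach⟩ := h
    obtain ⟨g, hg, hgx⟩ := hreach p
    intro j h0
    apply hx j
    rw [← familyAct_adjugate_left (det_eq_one_of_mem_transferMonoid hg) x, ← hgx,
      familyAct_apply, h0, Matrix.mulVec_zero]
  have hD := h.eq_top_of_maximal hE hEinj hz hmax
  obtain ⟨L, F, F', p, hF, hFp, hrange, hreach⟩ := h
  have hnhds : Set.range F ∈ 𝓝 z := by
    rw [← hFp, ← hF.map_nhds_eq_of_surj (hrange.trans hD)]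
    exact range_mem_map
  choose k hk hkz using fun j => exists_det_eq_one_mulVec_eq (hz j) (hy j)
  have hkz' : familyAct k z = y := funext hkz
  have hcont : Continuous fun g : ι → Matrix (Fin 2) (Fin 2) ℝ =>
      familyAct (fun j => (g j).adjugate) y :=
    continuous_familyAct continuous_family_adjugate continuous_const
  have hk' : familyAct (fun j => (k j).adjugate) y = z := by
    rw [← hkz', familyAct_adjugate_left hk]
  have hpre : {g | familyAct (fun j => (g j).adjugate) y ∈ Set.range F} ∈ 𝓝 k :=
    hcont.continuousAt.preimage_mem_nhds (by rwa [hk'])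
  obtain ⟨g, ⟨q, hq⟩, hg⟩ :=
    mem_closure_iff_nhds.1 (mem_closure_transferMonoid hE hEinj hk) _ hpre
  obtain ⟨g', hg', hgx⟩ := hreach q
  refine ⟨g * g', mul_mem hg hg', ?_⟩
  rw [familyAct_mul, ← hgx, hq, familyAct_adjugate_right (det_eq_one_of_mem_transferMonoid hg)]

end Transitivity

section Asymptotics

open ComplexConjugate

/-- One step of the averaging transformation for `a' - a = τ ((P' - P) a + (S' - S - ν) conj a)`:
after the change of variables `y = a - τ (P a + S conj a)` only the constant term remains, up to
an error of second order in `τ`. -/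
theorem norm_averaging_step_le {a a' P P' S S' : ℂ} {τ τ' ν B : ℝ} (hτ : 0 ≤ τ) (hτ1 : τ ≤ 1)
    (hτ' : |τ - τ'| ≤ τ ^ 2) (hν : 0 ≤ ν) (hP : ‖P‖ ≤ B) (hP' : ‖P'‖ ≤ B) (hS : ‖S‖ ≤ B)
    (hS' : ‖S'‖ ≤ B) (h : a' - a = τ * ((P' - P) * a + (S' - S - ν) * conj a)) :
    ‖(a' - τ' * (P' * a' + S' * conj a')) - (a - τ * (P * a + S * conj a)) +
        (τ * ν : ℝ) * conj (a - τ * (P * a + S * conj a))‖ ≤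
      τ ^ 2 * ((2 * B * (1 + (4 * B + ν)) + 2 * B * (4 * B + ν) + 2 * B * ν) * ‖a‖) := by
  have hB : 0 ≤ B := (norm_nonneg _).trans hP
  have ha := norm_nonneg a
  have key : (a' - τ' * (P' * a' + S' * conj a')) - (a - τ * (P * a + S * conj a)) +
        (τ * ν : ℝ) * conj (a - τ * (P * a + S * conj a)) =
      ((τ - τ' : ℝ) : ℂ) * (P' * a' + S' * conj a') - τ * (P' * (a' - a) + S' * conj (a' - a)) -
        ((τ ^ 2 * ν : ℝ) : ℂ) * conj (P * a + S * conj a) := by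
    simp only [map_sub, map_mul, map_add, Complex.conj_ofReal, Complex.conj_conj]
    push_cast
    linear_combination h
  have hcomb : ∀ {x y z : ℂ}, ‖x‖ ≤ B → ‖y‖ ≤ B → ‖x * z + y * conj z‖ ≤ 2 * B * ‖z‖ := by
    intro x y z hx hy
    calc ‖x * z + y * conj z‖ ≤ ‖x‖ * ‖z‖ + ‖y‖ * ‖z‖ := by
          refine (norm_add_le _ _).trans_eq ?_
          rw [norm_mul, norm_mul, RCLike.norm_conj]
      _ ≤ B * ‖z‖ + B * ‖z‖ := by gcongr
      _ = 2 * B * ‖z‖ := by ring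
  have hd : ‖a' - a‖ ≤ τ * ((4 * B + ν) * ‖a‖) := by
    rw [h, norm_mul, Complex.norm_real, Real.norm_of_nonneg hτ]
    gcongr
    calc ‖(P' - P) * a + (S' - S - ν) * conj a‖
        ≤ ‖P' - P‖ * ‖a‖ + ‖S' - S - ν‖ * ‖a‖ := by
          refine (norm_add_le _ _).trans_eq ?_
          rw [norm_mul, norm_mul, RCLike.norm_conj]
      _ ≤ (B + B) * ‖a‖ + (B + B + ν) * ‖a‖ := by
          gcongr
          · exact (norm_sub_le _ _).trans (add_le_add hP' hP)
          · refine (norm_sub_le _ _).trans (add_le_add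
              ((norm_sub_le _ _).trans (add_le_add hS' hS)) ?_)
            rw [Complex.norm_real, Real.norm_of_nonneg hν]
      _ = (4 * B + ν) * ‖a‖ := by ring
  have ha' : ‖a'‖ ≤ (1 + (4 * B + ν)) * ‖a‖ := by
    calc ‖a'‖ = ‖a + (a' - a)‖ := by rw [add_sub_cancel]
      _ ≤ ‖a‖ + 1 * ((4 * B + ν) * ‖a‖) := (norm_add_le _ _).trans (by
          gcongr
          exact hd.trans (by gcongr))
      _ = _ := by ring
  rw [key]
  calc _ ≤ ‖((τ - τ' : ℝ) : ℂ) * (P' * a' + S' * conj a')‖ +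
        ‖(τ : ℂ) * (P' * (a' - a) + S' * conj (a' - a))‖ +
        ‖((τ ^ 2 * ν : ℝ) : ℂ) * conj (P * a + S * conj a)‖ :=
        (norm_sub_le _ _).trans (add_le_add_left (norm_sub_le _ _) _)
    _ ≤ τ ^ 2 * (2 * B * ((1 + (4 * B + ν)) * ‖a‖)) + τ * (2 * B * (τ * ((4 * B + ν) * ‖a‖))) +
        τ ^ 2 * ν * (2 * B * ‖a‖) := by
        rw [norm_mul, norm_mul, norm_mul, RCLike.norm_conj, Complex.norm_real, Complex.norm_real,
          Complex.norm_real, Real.norm_eq_abs, Real.norm_of_nonneg hτ,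
          Real.norm_of_nonneg (by positivity : 0 ≤ τ ^ 2 * ν)]
        gcongr
        · exact (hcomb hP' hS').trans (by gcongr)
        · exact (hcomb hP' hS').trans (by gcongr)
        · exact hcomb hP hS
    _ = _ := by ring

theorem norm_le_two_mul_norm_averaging {a P S : ℂ} {τ B : ℝ} (hτ : 0 ≤ τ) (hP : ‖P‖ ≤ B)
    (hS : ‖S‖ ≤ B) (hB : 4 * B * τ ≤ 1) : ‖a‖ ≤ 2 * ‖a - τ * (P * a + S * conj a)‖ := by
  have h1 : ‖(τ : ℂ) * (P * a + S * conj a)‖ ≤ τ * (B * ‖a‖ + B * ‖a‖) := by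
    rw [norm_mul, Complex.norm_real, Real.norm_of_nonneg hτ]
    gcongr
    refine (norm_add_le _ _).trans ?_
    rw [norm_mul, norm_mul, RCLike.norm_conj]
    gcongr
  have h2 := norm_sub_norm_le a (τ * (P * a + S * conj a))
  nlinarith [norm_nonneg a]

section Cone

variable {y y' : ℂ} {t : ℝ}

theorem abs_re_lt_abs_im_of_step (ht : 0 ≤ t) (ht1 : t ≤ 1)
    (h : ‖y' - y + t * conj y‖ ≤ t / 4 * ‖y‖) (hy : |y.re| < |y.im|) : |y'.re| < |y'.im| := by
  have hn := Complex.norm_le_abs_re_add_abs_im y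
  have hre := (Complex.abs_re_le_norm _).trans h
  have him := (Complex.abs_im_le_norm _).trans h
  simp only [Complex.add_re, Complex.sub_re, Complex.re_ofReal_mul, Complex.conj_re,
    Complex.add_im, Complex.sub_im, Complex.im_ofReal_mul, Complex.conj_im] at hre him
  have hbd : t / 4 * ‖y‖ ≤ t / 2 * |y.im| := by nlinarith
  have h1 : |y'.re| ≤ (1 - t) * |y.re| + t / 2 * |y.im| := by
    calc |y'.re| = |(1 - t) * y.re + (y'.re - y.re + t * y.re)| := by ring_nf
      _ ≤ |(1 - t) * y.re| + |y'.re - y.re + t * y.re| := abs_add_le _ _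
      _ ≤ _ := by
        rw [abs_mul, abs_of_nonneg (by linarith : 0 ≤ 1 - t)]
        linarith
  have h2 : (1 + t) * |y.im| ≤ |y'.im| + t / 2 * |y.im| := by
    calc (1 + t) * |y.im| = |y'.im - (y'.im - y.im + t * -y.im)| := by
          rw [← abs_of_nonneg (by linarith : 0 ≤ 1 + t), ← abs_mul]
          ring_nf
      _ ≤ |y'.im| + |y'.im - y.im + t * -y.im| := abs_sub _ _
      _ ≤ _ := by linarith
  nlinarith [mul_nonneg ht (abs_nonneg y.re)]

theorem abs_re_le_of_step (ht : 0 ≤ t) (ht1 : t ≤ 1)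
    (h : ‖y' - y + t * conj y‖ ≤ t / 4 * ‖y‖) (hy : |y.im| ≤ |y.re|) :
    |y'.re| ≤ (1 - t / 2) * |y.re| := by
  have hn := Complex.norm_le_abs_re_add_abs_im y
  have hre := (Complex.abs_re_le_norm _).trans h
  simp only [Complex.add_re, Complex.sub_re, Complex.re_ofReal_mul, Complex.conj_re] at hre
  have hbd : t / 4 * ‖y‖ ≤ t / 2 * |y.re| := by nlinarith
  calc |y'.re| = |(1 - t) * y.re + (y'.re - y.re + t * y.re)| := by ring_nf
    _ ≤ |(1 - t) * y.re| + |y'.re - y.re + t * y.re| := abs_add_le _ _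
    _ ≤ _ := by
      rw [abs_mul, abs_of_nonneg (by linarith : 0 ≤ 1 - t)]
      linarith

end Cone

/-- A linear recurrence close to `y' = y - (ν / n) conj y` with `ν ≥ 2` has a solution which
decays like `1 / n`. -/
theorem exists_ne_zero_norm_le_of_step (Y : ℕ → ℝ × ℝ →ₗ[ℝ] ℂ) {ν : ℝ} (hν : 2 ≤ ν) (N : ℕ)
    (hN : ν ≤ N + 1)
    (h : ∀ n ≥ N, ∀ x, ‖Y (n + 1) x - Y n x + (1 / (n + 1) * ν : ℝ) * conj (Y n x)‖ ≤
      1 / (n + 1) * ν / 4 * ‖Y n x‖) :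
    ∃ x ≠ 0, ∃ M, ∀ n ≥ N, n * ‖Y n x‖ ≤ M := by
  have ht : ∀ n : ℕ, 0 ≤ 1 / ((n : ℝ) + 1) * ν := fun n => by positivity
  have ht1 : ∀ n ≥ N, 1 / ((n : ℝ) + 1) * ν ≤ 1 := fun n hn => by
    have : (N : ℝ) ≤ n := by exact_mod_cast hn
    rw [one_div_mul_eq_div, div_le_one (by positivity)]
    linarith
  let K : ℕ → Set (ℝ × ℝ) := fun n =>
    Metric.sphere 0 1 ∩ {x | |(Y (N + n) x).im| ≤ |(Y (N + n) x).re|}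
  have hYc : ∀ n, Continuous (Y n) := fun n => (Y n).continuous_of_finiteDimensional
  have hKclosed : ∀ n, IsClosed (K n) := fun n => Metric.isClosed_sphere.inter
    (isClosed_le (Complex.continuous_im.comp (hYc _)).abs (Complex.continuous_re.comp (hYc _)).abs)
  have hKsub : ∀ n, K (n + 1) ⊆ K n := by
    rintro n x ⟨hx, hxn⟩
    refine ⟨hx, ?_⟩
    by_contra hlt
    refine (not_le.2 ?_ : ¬ |(Y (N + (n + 1)) x).im| ≤ |(Y (N + (n + 1)) x).re|) hxn
    exact abs_re_lt_abs_im_of_step (ht _) (ht1 _ (Nat.le_add_right N n))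
      (h _ (Nat.le_add_right N n) x) (not_le.1 hlt)
  have hKne : ∀ n, (K n).Nonempty := by
    intro n
    have hker := LinearMap.ker_ne_bot_of_finrank_lt (f := Complex.imLm ∘ₗ Y (N + n)) (by simp)
    obtain ⟨x, hx, hx0⟩ := Submodule.exists_mem_ne_zero_of_ne_bot hker
    have hx' : (Y (N + n) x).im = 0 := hx
    refine ⟨‖x‖⁻¹ • x, ?_, ?_⟩
    · simp [norm_smul, norm_ne_zero_iff.2 hx0]
    · simp [hx', mul_nonneg]
  obtain ⟨x, hx⟩ := IsCompact.nonempty_iInter_of_sequence_nonempty_isCompact_isClosed K hKsub hKne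
    ((isCompact_sphere _ _).inter_right (isClosed_le (Complex.continuous_im.comp (hYc _)).abs
      (Complex.continuous_re.comp (hYc _)).abs)) hKclosed
  have hxK : ∀ n ≥ N, |(Y n x).im| ≤ |(Y n x).re| := fun n hn => by
    obtain ⟨d, rfl⟩ := Nat.exists_eq_add_of_le hn
    exact (Set.mem_iInter.1 hx d).2
  refine ⟨x, ?_, 2 * (N * |(Y N x).re|), fun n hn => ?_⟩
  · rintro rfl
    simpa using (Set.mem_iInter.1 hx 0).1
  · have hre : n * |(Y n x).re| ≤ N * |(Y N x).re| := by
      induction n, hn using Nat.le_induction with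
      | base => rfl
      | succ n hn ih =>
        refine le_trans ?_ ih
        have h1 := abs_re_le_of_step (ht n) (ht1 n hn) (h n hn x) (hxK n hn)
        have h2 : ((n + 1 : ℕ) : ℝ) * (1 - 1 / (n + 1) * ν / 2) ≤ n := by
          push_cast
          field_simp
          linarith
        calc ((n + 1 : ℕ) : ℝ) * |(Y (n + 1) x).re|
            ≤ ((n + 1 : ℕ) : ℝ) * ((1 - 1 / (n + 1) * ν / 2) * |(Y n x).re|) := by gcongr
          _ ≤ n * |(Y n x).re| := by
            rw [← mul_assoc]
            gcongr
    have h1 := Complex.norm_le_abs_re_add_abs_im (Y n x)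
    calc n * ‖Y n x‖ ≤ n * (2 * |(Y n x).re|) := by
          gcongr
          linarith [hxK n hn]
      _ ≤ _ := by linarith

/-- Oscillating perturbations with bounded partial sums do not destroy the decaying solution of
`a' = a - (ν / n) conj a`. -/
theorem exists_ne_zero_norm_le_of_recurrence (A : ℕ → ℝ × ℝ →ₗ[ℝ] ℂ) {ν B : ℝ} (hν : 2 ≤ ν)
    (P S : ℕ → ℂ) (hP : ∀ n, ‖P n‖ ≤ B) (hS : ∀ n, ‖S n‖ ≤ B)
    (hA : ∀ n x, A (n + 1) x - A n x = (1 / (n + 1) : ℝ) *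
      ((P (n + 1) - P n) * A n x + (S (n + 1) - S n - ν) * conj (A n x))) :
    ∃ x ≠ 0, ∃ M, ∃ N : ℕ, ∀ n ≥ N, n * ‖A n x‖ ≤ M := by
  let Y : ℕ → ℝ × ℝ →ₗ[ℝ] ℂ := fun n =>
    { toFun := fun x => A n x - (1 / (n + 1) : ℝ) * (P n * A n x + S n * conj (A n x))
      map_add' := fun x y => by
        simp only [map_add]
        ring
      map_smul' := fun c x => by
        simp only [map_smul, Complex.real_smul, map_mul, Complex.conj_ofReal, RingHom.id_apply]
        ring }
  have hY : ∀ n x, Y n x = A n x - (1 / (n + 1) : ℝ) * (P n * A n x + S n * conj (A n x)) :=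
    fun _ _ => rfl
  let D := 2 * B * (1 + (4 * B + ν)) + 2 * B * (4 * B + ν) + 2 * B * ν
  have hB : 0 ≤ B := (norm_nonneg _).trans (hP 0)
  have hD : 0 ≤ D := by positivity
  obtain ⟨N, hN⟩ := exists_nat_ge (max ν (max (4 * B) (4 * D)))
  have hτ : ∀ n : ℕ, 0 ≤ 1 / ((n : ℝ) + 1) := fun n => by positivity
  have hNn : ∀ n ≥ N, max ν (max (4 * B) (4 * D)) ≤ n + 1 := fun n hn => by
    have : (N : ℝ) ≤ n := by exact_mod_cast hn
    linarith
  have hAY : ∀ n ≥ N, ∀ x, ‖A n x‖ ≤ 2 * ‖Y n x‖ := fun n hn x => by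
    refine norm_le_two_mul_norm_averaging (hτ n) (hP n) (hS n) ?_
    rw [mul_one_div, div_le_one (by positivity)]
    exact ((le_max_left _ _).trans (le_max_right _ _)).trans (hNn n hn)
  obtain ⟨x, hx, M, hM⟩ := exists_ne_zero_norm_le_of_step Y hν N
    ((le_max_left _ _).trans (hNn N le_rfl)) (fun n hn x => by
      have h1 := norm_averaging_step_le (τ' := 1 / ((n + 1 : ℕ) + 1)) (hτ n)
        (by
          rw [div_le_one (by positivity)]
          linarith [n.cast_nonneg (α := ℝ)])
        (by
          rw [abs_of_nonneg]
          · push_cast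
            field_simp
            linarith
          · push_cast
            rw [sub_nonneg]
            gcongr
            linarith)
        (by linarith) (hP n) (hP (n + 1)) (hS n) (hS (n + 1)) (hA n x)
      refine h1.trans ?_
      have h2 : 4 * D ≤ n + 1 :=
        ((le_max_right _ _).trans (le_max_right _ _)).trans (hNn n hn)
      have h3 : 1 / ((n : ℝ) + 1) * (4 * D) ≤ 1 := by
        rw [one_div_mul_eq_div, div_le_one (by positivity)]
        exact h2
      calc (1 / ((n : ℝ) + 1)) ^ 2 * (D * ‖A n x‖)
          ≤ (1 / ((n : ℝ) + 1)) ^ 2 * (D * (2 * ‖Y n x‖)) := by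
            gcongr
            exact hAY n hn x
        _ = 1 / ((n : ℝ) + 1) * (1 / ((n : ℝ) + 1) * (4 * D)) / 2 * ‖Y n x‖ := by ring
        _ ≤ 1 / ((n : ℝ) + 1) * 1 / 2 * ‖Y n x‖ := by gcongr
        _ ≤ 1 / ((n : ℝ) + 1) * ν / 4 * ‖Y n x‖ := by
            gcongr ?_ * _
            nlinarith [hτ n])
  refine ⟨x, hx, 2 * M, N, fun n hn => ?_⟩
  calc n * ‖A n x‖ ≤ n * (2 * ‖Y n x‖) := by
        gcongr
        exact hAY n hn x
    _ ≤ 2 * M := by linarith [hM n hn]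

end Asymptotics

section BoundedPartialSums

/-- The partial sums of `f` are bounded. -/
def HasBoundedPartialSums (f : ℕ → ℂ) : Prop :=
  ∃ C, ∀ N, ‖∑ n ∈ Finset.range N, f n‖ ≤ C

namespace HasBoundedPartialSums

variable {f g : ℕ → ℂ}

theorem add (hf : HasBoundedPartialSums f) (hg : HasBoundedPartialSums g) :
    HasBoundedPartialSums fun n => f n + g n := by
  obtain ⟨C, hC⟩ := hf
  obtain ⟨D, hD⟩ := hg
  refine ⟨C + D, fun N => ?_⟩
  rw [Finset.sum_add_distrib]
  exact (norm_add_le _ _).trans (add_le_add (hC N) (hD N))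

theorem const_mul (hf : HasBoundedPartialSums f) (c : ℂ) :
    HasBoundedPartialSums fun n => c * f n := by
  obtain ⟨C, hC⟩ := hf
  refine ⟨‖c‖ * C, fun N => ?_⟩
  rw [← Finset.mul_sum, norm_mul]
  exact mul_le_mul_of_nonneg_left (hC N) (norm_nonneg c)

theorem sum {ι : Type*} (s : Finset ι) {f : ι → ℕ → ℂ}
    (hf : ∀ i, HasBoundedPartialSums (f i)) : HasBoundedPartialSums fun n => ∑ i ∈ s, f i n := by
  choose C hC using hf
  refine ⟨∑ i ∈ s, C i, fun N => ?_⟩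
  rw [Finset.sum_comm]
  exact norm_sum_le_of_le _ fun i _ => hC i N

end HasBoundedPartialSums

theorem hasBoundedPartialSums_pow_succ {z : ℂ} (hz : ‖z‖ = 1) (h : z ≠ 1) :
    HasBoundedPartialSums fun n => z ^ (n + 1) := by
  refine ⟨2 / ‖z - 1‖, fun N => ?_⟩
  simp only [pow_succ]
  rw [← Finset.sum_mul, geom_sum_eq h, norm_mul, hz, mul_one, norm_div]
  gcongr
  refine (norm_sub_le _ _).trans ?_
  rw [norm_pow, hz]
  norm_num

theorem hasBoundedPartialSums_pow_succ_sub {z : ℂ} (hz : ‖z‖ = 1) :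
    HasBoundedPartialSums fun n => z ^ (n + 1) - if z = 1 then 1 else 0 := by
  split_ifs with h
  · exact ⟨0, fun N => by simp [h]⟩
  · simpa using hasBoundedPartialSums_pow_succ hz h

end BoundedPartialSums

section DecayingSolutions

open ComplexConjugate

/-- The solution of `u (n + 1) + u (n - 1) + V n * u n = e * u n` as a linear function of
`(u 0, u 1)`. -/
noncomputable def solutionMap (V : ℕ → ℝ) (e : ℝ) : ℕ → ℝ × ℝ →ₗ[ℝ] ℝ
  | 0 => LinearMap.fst ℝ ℝ ℝ
  | 1 => LinearMap.snd ℝ ℝ ℝ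
  | n + 2 => e • solutionMap V e (n + 1) - solutionMap V e n - V (n + 1) • solutionMap V e (n + 1)

/-- The first order form of one step of the eigenvalue equation in variation of constants
coordinates. -/
theorem variation_of_constants_step {ζ z ξ : ℂ} (hζ : ζ * conj ζ = 1) (hz : z * conj z = 1)
    (hξ : conj ξ = Complex.I * ξ) (a b v : ℝ) :
    (-2 * ζ.im : ℝ) * (ξ * (z * ζ) * ((2 * ζ.re * b - a - v * b : ℝ) - ζ * b) -
        ξ * z * (b - ζ * a)) =
      v * (Complex.I * (ξ * z * (b - ζ * a)) - ζ ^ 2 * z ^ 2 * conj (ξ * z * (b - ζ * a))) := by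
  have hre : ((2 * ζ.re : ℝ) : ℂ) = ζ + conj ζ := by
    rw [Complex.add_conj]
  have him : ((-2 * ζ.im : ℝ) : ℂ) = Complex.I * (ζ - conj ζ) := by
    rw [Complex.sub_conj]
    push_cast
    linear_combination (-2 * (ζ.im : ℂ)) * Complex.I_sq
  have h2 : ((2 * ζ.re * b - a - v * b : ℝ) : ℂ) = (ζ + conj ζ) * b - a - v * b := by
    rw [← hre]
    push_cast
    ring
  rw [him, h2]
  simp only [map_mul, map_sub, Complex.conj_ofReal, hξ]
  have e1 : ξ * (z * ζ) * ((ζ + conj ζ) * b - a - v * b - ζ * b) - ξ * z * (b - ζ * a) =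
      - (ξ * z * ζ * v * b) := by
    linear_combination ξ * z * b * hζ
  rw [e1]
  linear_combination (v * Complex.I * ξ * z * b) * hζ +
    (v * Complex.I * ξ * z * (ζ ^ 2 * b - ζ * (ζ * conj ζ) * a)) * hz -
    (v * Complex.I * ξ * z * ζ * a) * hζ

theorem exists_square_summable_solution {ζ : ℂ} (hζ : ‖ζ‖ = 1) (him : ζ.im < 0) {V W : ℕ → ℝ}
    (hV : ∀ n, V (n + 1) = 8 * W n / (n + 1)) (hW : HasBoundedPartialSums fun n => W n) {w : ℝ}
    (hw : 1 / 2 ≤ w) (hWζ : HasBoundedPartialSums fun n => W n * (ζ ^ 2) ^ (n + 1) - w) :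
    ∃ u : ℕ → ℝ, ![u 1, u 0] ≠ 0 ∧ Summable (fun n => u n ^ 2) ∧
      ∀ n, u (n + 2) + u n + V (n + 1) * u (n + 1) = 2 * ζ.re * u (n + 1) := by
  let U := solutionMap V (2 * ζ.re)
  have hU : ∀ n x, U (n + 2) x = 2 * ζ.re * U (n + 1) x - U n x - V (n + 1) * U (n + 1) x :=
    fun n x => rfl
  let ξ : ℂ := 1 - Complex.I
  have hξ : conj ξ = Complex.I * ξ := by
    simp only [ξ, map_sub, map_one, Complex.conj_I]
    linear_combination Complex.I_sq
  have hζc : ζ * conj ζ = 1 := by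
    rw [Complex.mul_conj, Complex.normSq_eq_norm_sq, hζ]
    norm_num
  have hs : 0 < -ζ.im := neg_pos.2 him
  have hs1 : -ζ.im ≤ 1 := hζ ▸ (neg_le_abs _).trans (Complex.abs_im_le_norm ζ)
  let A : ℕ → ℝ × ℝ →ₗ[ℝ] ℂ := fun n =>
    { toFun := fun x => ξ * ζ ^ n * (U (n + 1) x - ζ * U n x)
      map_add' := fun x y => by
        simp only [map_add, Complex.ofReal_add]
        ring
      map_smul' := fun c x => by
        simp only [map_smul, smul_eq_mul, Complex.ofReal_mul, Complex.real_smul, RingHom.id_apply]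
        ring }
  have hA : ∀ n x, A n x = ξ * ζ ^ n * (U (n + 1) x - ζ * U n x) := fun _ _ => rfl
  have hsC : ((-ζ.im : ℝ) : ℂ) ≠ 0 := by exact_mod_cast hs.ne'
  have hstep : ∀ n x, A (n + 1) x - A n x = (1 / (n + 1) : ℝ) *
      (Complex.I * (4 / (-ζ.im) : ℝ) * W n * A n x -
        (4 / (-ζ.im) : ℝ) * (W n * (ζ ^ 2) ^ (n + 1)) * conj (A n x)) := by
    intro n x
    have hz : ζ ^ n * conj (ζ ^ n) = 1 := by
      rw [map_pow, ← mul_pow, hζc, one_pow]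
    have h1 := variation_of_constants_step hζc hz hξ (U n x) (U (n + 1) x) (V (n + 1))
    rw [← hU, ← pow_succ, ← hA, ← hA, hV] at h1
    have hn : (n : ℂ) + 1 ≠ 0 := by exact_mod_cast n.succ_ne_zero
    have h2 : ((-2 * ζ.im : ℝ) : ℂ) = 2 * (-ζ.im : ℝ) := by
      push_cast
      ring
    rw [h2] at h1
    apply mul_left_cancel₀ (mul_ne_zero two_ne_zero hsC)
    rw [h1]
    rw [Complex.ofReal_div 4 (-ζ.im)]
    generalize ((-ζ.im : ℝ) : ℂ) = σ at *
    push_cast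
    field_simp
    ring
  obtain ⟨B₁, hB₁⟩ := hW
  obtain ⟨B₂, hB₂⟩ := hWζ
  let P : ℕ → ℂ := fun n => Complex.I * (4 / (-ζ.im) : ℝ) * ∑ i ∈ Finset.range n, (W i : ℂ)
  let S : ℕ → ℂ := fun n => -(4 / (-ζ.im) : ℝ) *
    ∑ i ∈ Finset.range n, (W i * (ζ ^ 2) ^ (i + 1) - w)
  have h4 : 0 ≤ 4 / (-ζ.im) := by positivity
  obtain ⟨x, hx, M, N, hM⟩ := exists_ne_zero_norm_le_of_recurrence A (ν := 4 / (-ζ.im) * w)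
    (B := 4 / (-ζ.im) * max B₁ B₂)
    (by
      rw [div_mul_eq_mul_div, le_div_iff₀ hs]
      linarith)
    P S
    (fun n => by
      simp only [P]
      rw [norm_mul, norm_mul, Complex.norm_I, one_mul, Complex.norm_real, Real.norm_of_nonneg h4]
      gcongr
      exact (hB₁ n).trans (le_max_left _ _))
    (fun n => by
      simp only [S]
      rw [norm_mul, norm_neg, Complex.norm_real, Real.norm_of_nonneg h4]
      gcongr
      exact (hB₂ n).trans (le_max_right _ _))
    (fun n x => by
      rw [hstep]
      simp only [P, S, Finset.sum_range_succ, Complex.ofReal_mul]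
      ring)
  have hUA : ∀ n, |U (n + 1) x| * (-ζ.im) ≤ ‖A n x‖ := by
    intro n
    have h1 : (conj ζ * (U (n + 1) x - ζ * U n x)).im = U (n + 1) x * (-ζ.im) := by
      have : conj ζ * (U (n + 1) x - ζ * U n x) = conj ζ * U (n + 1) x - U n x := by
        linear_combination (-(U n x : ℂ)) * hζc
      rw [this]
      simp [mul_comm]
    have h2 := Complex.abs_im_le_norm (conj ζ * (U (n + 1) x - ζ * U n x))
    rw [h1, abs_mul, abs_of_pos hs, norm_mul, RCLike.norm_conj, hζ, one_mul] at h2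
    refine h2.trans ?_
    have hξ1 : 1 ≤ ‖ξ‖ := by
      have := Complex.abs_re_le_norm ξ
      simpa [ξ] using this
    rw [hA, norm_mul, norm_mul, norm_pow, hζ, one_pow, mul_one]
    exact le_mul_of_one_le_left (norm_nonneg _) hξ1
  refine ⟨fun n => U n x, ?_, ?_, fun n => ?_⟩
  · intro h
    apply hx
    have h0 := congrFun h 0
    have h1 := congrFun h 1
    exact Prod.ext h1 h0
  · rw [← summable_nat_add_iff 1]
    have hO : (fun n => U (n + 1) x ^ 2) =O[atTop] fun n : ℕ => 1 / (n : ℝ) ^ 2 := by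
      refine Asymptotics.IsBigO.of_bound ((M / (-ζ.im)) ^ 2) ?_
      filter_upwards [eventually_ge_atTop (max N 1)] with n hn
      have hn0 : (0 : ℝ) < n := by exact_mod_cast (le_max_right _ _).trans hn
      have h1 : |U (n + 1) x| ≤ M / (-ζ.im) * (1 / n) := by
        rw [div_mul_div_comm, mul_one, le_div_iff₀ (by positivity)]
        calc |U (n + 1) x| * (-ζ.im * n) = n * (|U (n + 1) x| * (-ζ.im)) := by ring
          _ ≤ n * ‖A n x‖ := by
            gcongr
            exact hUA n
          _ ≤ M := hM n ((le_max_left _ _).trans hn)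
      rw [Real.norm_of_nonneg (sq_nonneg _), Real.norm_of_nonneg (by positivity), ← sq_abs]
      calc |U (n + 1) x| ^ 2 ≤ (M / (-ζ.im) * (1 / n)) ^ 2 := by gcongr
        _ = _ := by ring
    exact summable_of_isBigO_nat (Real.summable_one_div_nat_pow.2 one_lt_two) hO
  · simp only [hU]
    ring

theorem exists_norm_eq_one_of_mem_Ioo {e : ℝ} (he : e ∈ Set.Ioo (-2 : ℝ) 2) :
    ∃ ζ : ℂ, ‖ζ‖ = 1 ∧ ζ.im < 0 ∧ 2 * ζ.re = e := by
  obtain ⟨k, hk0, hkπ, rfl⟩ := exists_angle he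
  refine ⟨Complex.exp ((-k : ℝ) * Complex.I), Complex.norm_exp_ofReal_mul_I _, ?_, ?_⟩
  · rw [Complex.exp_ofReal_mul_I_im, Real.sin_neg]
    exact neg_neg_of_pos (Real.sin_pos_of_pos_of_lt_pi hk0 hkπ)
  · rw [Complex.exp_ofReal_mul_I_re, Real.cos_neg]

/-- A family of data `(u 1, u 0)` which, for a common potential of size `O(1 / n)`, extends to
square summable solutions at all the given energies. -/
def HasSquareSummableExtension {ι : Type*} (E : ι → ℝ) (x : ι → Fin 2 → ℝ) : Prop :=
  ∃ (V : ℕ → ℝ) (C : ℝ), (∀ n : ℕ, |V n| ≤ C / (1 + (n : ℝ))) ∧ ∀ j, ∃ u : ℕ → ℝ,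
    ![u 1, u 0] = x j ∧ Summable (fun n => u n ^ 2) ∧
      ∀ n, u (n + 2) + u n + V (n + 1) * u (n + 1) = E j * u (n + 1)

variable {ι : Type*} {E : ι → ℝ}

theorem exists_hasSquareSummableExtension [Fintype ι] (hE : ∀ j, E j ∈ Set.Ioo (-2 : ℝ) 2) :
    ∃ x : ι → Fin 2 → ℝ, (∀ j, x j ≠ 0) ∧ HasSquareSummableExtension E x := by
  choose ζ hζ him hre using fun j => exists_norm_eq_one_of_mem_Ioo (hE j)
  let W : ℕ → ℝ := fun n => ∑ i, ((ζ i ^ 2) ^ (n + 1)).re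
  have hWC : ∀ n, (W n : ℂ) =
      ∑ i, (1 / 2 : ℂ) * ((ζ i ^ 2) ^ (n + 1) + (conj (ζ i) ^ 2) ^ (n + 1)) := by
    intro n
    simp only [W, Complex.ofReal_sum]
    refine Finset.sum_congr rfl fun i _ => ?_
    rw [Complex.re_eq_add_conj, map_pow, map_pow]
    ring
  have hζ2 : ∀ i, ζ i ^ 2 ≠ 1 := by
    intro i h
    rcases eq_or_eq_neg_of_sq_eq_sq _ 1 (h.trans (one_pow 2).symm) with h | h
    all_goals
      have := him i
      simp [h] at this
  have hcζ2 : ∀ i, conj (ζ i) ^ 2 ≠ 1 := by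
    intro i h
    apply hζ2 i
    have := congrArg conj h
    simpa using this
  have hWb : HasBoundedPartialSums fun n => (W n : ℂ) := by
    simp only [hWC]
    refine .sum _ fun i => ((?_ : HasBoundedPartialSums _).add ?_).const_mul _
    · exact hasBoundedPartialSums_pow_succ (by simp [hζ]) (hζ2 i)
    · exact hasBoundedPartialSums_pow_succ (by simp [hζ]) (hcζ2 i)
  let V : ℕ → ℝ := fun n => 8 * W (n - 1) / n
  have hWle : ∀ n, |W n| ≤ Fintype.card ι := by
    intro n
    refine (Finset.abs_sum_le_sum_abs _ _).trans ?_
    refine (Finset.sum_le_card_nsmul _ _ 1 fun i _ => ?_).trans_eq (by simp)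
    refine (Complex.abs_re_le_norm _).trans_eq ?_
    simp [hζ]
  have hV : ∀ n : ℕ, |V n| ≤ 16 * Fintype.card ι / (1 + (n : ℝ)) := by
    intro n
    rcases n.eq_zero_or_pos with rfl | hn
    · simp [V]
    · have hn' : (1 : ℝ) ≤ n := by exact_mod_cast hn
      simp only [V]
      rw [abs_div, abs_mul, abs_of_pos (by norm_num : (0 : ℝ) < 8), Nat.abs_cast,
        div_le_div_iff₀ (by positivity) (by positivity)]
      have h1 := hWle (n - 1)
      have h2 : |W (n - 1)| * (1 + n) ≤ Fintype.card ι * (2 * n) := by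
        gcongr
        linarith
      linarith
  have hex : ∀ j, ∃ u : ℕ → ℝ, ![u 1, u 0] ≠ 0 ∧ Summable (fun n => u n ^ 2) ∧
      ∀ n, u (n + 2) + u n + V (n + 1) * u (n + 1) = E j * u (n + 1) := by
    intro j
    classical
    let r : ℂ → ℝ := fun z => if z = 1 then 1 else 0
    have hr : ∀ z, 0 ≤ r z := fun z => by
      simp only [r]
      positivity
    rw [← hre j]
    refine exists_square_summable_solution (hζ j) (him j)
      (w := ∑ i, (1 / 2) * (r (ζ i ^ 2 * ζ j ^ 2) + r (conj (ζ i) ^ 2 * ζ j ^ 2)))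
      (fun n => by simp [V]) hWb ?_ ?_
    · have h1 : r (conj (ζ j) ^ 2 * ζ j ^ 2) = 1 := by
        have : conj (ζ j) * ζ j = 1 := by
          rw [mul_comm, Complex.mul_conj, Complex.normSq_eq_norm_sq, hζ]
          norm_num
        simp [r, ← mul_pow, this]
      refine le_trans ?_ (Finset.single_le_sum (fun i _ =>
        mul_nonneg (by norm_num) (add_nonneg (hr _) (hr _))) (Finset.mem_univ j))
      rw [h1]
      linarith [hr (ζ j ^ 2 * ζ j ^ 2)]
    · have hb : HasBoundedPartialSums fun n => ∑ i, (1 / 2 : ℂ) *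
          (((ζ i ^ 2 * ζ j ^ 2) ^ (n + 1) - r (ζ i ^ 2 * ζ j ^ 2)) +
            ((conj (ζ i) ^ 2 * ζ j ^ 2) ^ (n + 1) - r (conj (ζ i) ^ 2 * ζ j ^ 2))) := by
        refine .sum _ fun i => ((?_ : HasBoundedPartialSums _).add ?_).const_mul _
        · simpa [r, apply_ite Complex.ofReal] using
            hasBoundedPartialSums_pow_succ_sub (z := ζ i ^ 2 * ζ j ^ 2) (by simp [hζ])
        · simpa [r, apply_ite Complex.ofReal] using
            hasBoundedPartialSums_pow_succ_sub (z := conj (ζ i) ^ 2 * ζ j ^ 2) (by simp [hζ])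
      convert hb using 2 with n
      rw [hWC, Complex.ofReal_sum, Finset.sum_mul, ← Finset.sum_sub_distrib]
      refine Finset.sum_congr rfl fun i _ => ?_
      push_cast
      rw [mul_pow, mul_pow]
      ring
  choose u hu0 hu using hex
  exact ⟨fun j => ![u j 1, u j 0], hu0, V, _, hV, fun j => ⟨u j, rfl, hu j⟩⟩

theorem HasSquareSummableExtension.prepend {x : ι → Fin 2 → ℝ} {v : ℝ}
    (h : HasSquareSummableExtension E (familyAct (fun j => transferMatrix (E j) v) x)) :
    HasSquareSummableExtension E x := by
  obtain ⟨V, C, hC, hV⟩ := h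
  have hC0 : 0 ≤ C := by simpa using (abs_nonneg _).trans (hC 0)
  let V' : ℕ → ℝ
    | 0 => 0
    | 1 => v
    | n + 2 => V (n + 1)
  refine ⟨V', 2 * C + 2 * |v|, ?_, fun j => ?_⟩
  · have hv := abs_nonneg v
    rintro (_ | _ | n)
    · simp only [V', abs_zero]
      positivity
    · simp only [V']
      rw [le_div_iff₀ (by positivity)]
      push_cast
      linarith
    · refine (hC (n + 1)).trans ?_
      rw [div_le_div_iff₀ (by positivity) (by positivity)]
      push_cast
      have hn := n.cast_nonneg (α := ℝ)
      nlinarith [mul_nonneg hC0 hn, mul_nonneg hv hn]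
  · obtain ⟨u, hux, hsum, hu⟩ := hV j
    have h1 : u 1 = (E j - v) * x j 0 - x j 1 := by
      simpa [transferMatrix, sub_eq_add_neg] using congrFun hux 0
    have h0 : u 0 = x j 0 := by
      simpa [transferMatrix] using congrFun hux 1
    let u' : ℕ → ℝ
      | 0 => x j 1
      | n + 1 => u n
    refine ⟨u', ?_, (summable_nat_add_iff 1).1 hsum, ?_⟩
    · ext i
      fin_cases i
      · exact h0
      · rfl
    · rintro (_ | n)
      · simp only [u', V', h0, h1]
        ring
      · exact hu n

theorem HasSquareSummableExtension.of_familyAct {g : ι → Matrix (Fin 2) (Fin 2) ℝ}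
    (hg : g ∈ transferMonoid E) {x : ι → Fin 2 → ℝ}
    (h : HasSquareSummableExtension E (familyAct g x)) : HasSquareSummableExtension E x := by
  induction hg using Submonoid.closure_induction generalizing x with
  | mem g hg =>
    obtain ⟨v, rfl⟩ := hg
    exact h.prepend
  | one => rwa [familyAct_one] at h
  | mul a b _ _ iha ihb =>
    rw [familyAct_mul] at h
    exact ihb (iha h)

theorem hasSquareSummableExtension_of_ne_zero [Fintype ι] (hE : ∀ j, E j ∈ Set.Ioo (-2 : ℝ) 2)
    (hEinj : Function.Injective E) {x : ι → Fin 2 → ℝ} (hx : ∀ j, x j ≠ 0) :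
    HasSquareSummableExtension E x := by
  obtain ⟨y, hy, h⟩ := exists_hasSquareSummableExtension hE
  obtain ⟨g, hg, rfl⟩ := exists_mem_transferMonoid_familyAct_eq hE hEinj hx hy
  exact h.of_familyAct hg

end DecayingSolutions

/-- Theorem 1: for any finite set of distinct energies in `(-2,2)` and any boundary
phases, there is a potential `V` with `|V(n)| ≤ C/(1+n)` such that each `E j` is an
eigenvalue of `Δ + V` with the prescribed boundary condition. -/
theorem finitely_many_embedded_eigenvalues (m : ℕ) (E θ : Fin m → ℝ)
    (hE : ∀ j, E j ∈ Set.Ioo (-2 : ℝ) 2)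
    (hEinj : Function.Injective E)
    (hθ : ∀ j, θ j ∈ Set.Ico (0 : ℝ) Real.pi) :
    ∃ (V : ℕ → ℝ) (C : ℝ), 0 < C ∧ (∀ n : ℕ, |V n| ≤ C / (1 + (n : ℝ))) ∧
      ∀ j : Fin m, ∃ u : ℕ → ℝ, u ≠ 0 ∧ Summable (fun n => (u n) ^ 2) ∧
        (∀ n : ℕ, 1 ≤ n → u (n + 1) + u (n - 1) + V n * u n = E j * u n) ∧
        u 1 * Real.cos (θ j) = u 0 * Real.sin (θ j) := by
  obtain ⟨V, C, hC, hV⟩ := hasSquareSummableExtension_of_ne_zero hE hEinj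
    (x := fun j => ![Real.sin (θ j), Real.cos (θ j)]) (fun j h => by
      have h0 : Real.sin (θ j) = 0 := congrFun h 0
      have h1 : Real.cos (θ j) = 0 := congrFun h 1
      simpa [h0, h1] using Real.sin_sq_add_cos_sq (θ j))
  have hC0 : 0 ≤ C := by simpa using (abs_nonneg _).trans (hC 0)
  refine ⟨V, C + 1, by positivity, fun n => (hC n).trans (by gcongr; linarith), fun j => ?_⟩
  obtain ⟨u, hux, hsum, hu⟩ := hV j
  have h1 : u 1 = Real.sin (θ j) := congrFun hux 0
  have h0 : u 0 = Real.cos (θ j) := congrFun hux 1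
  refine ⟨u, ?_, hsum, fun n hn => ?_, ?_⟩
  · rintro rfl
    simpa [← h0, ← h1] using Real.sin_sq_add_cos_sq (θ j)
  · obtain ⟨n, rfl⟩ := Nat.exists_eq_add_of_le' hn
    exact hu n
  · rw [h0, h1, mul_comm]
end

section
/- Let {E_j}_{j=1}^∞ be a countable set of distinct points in (-2,2), let {θ_j}_{j=1}^∞ ⊂ [0,π), and let h : ℕ → (0,∞) be any non-decreasing function with h(n) → ∞ as n → ∞. Then there exists a potential V : ℕ → ℝ with |V(n)| ≤ h(n)/(1+n) for all n, such that for every j ∈ ℕ the eigen-equation u(n+1) + u(n-1) + V(n)u(n) = E_j·u(n) (n ≥ 1) has a nonzero solution u ∈ ℓ²(ℕ) satisfying the boundary condition u(1)·cos(θ_j) = u(0)·sin(θ_j). -/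
namespace EmbeddedEigenvalues

open Filter Topology ComplexConjugate Complex

noncomputable section

/-- The unimodular number `exp (i k)` with `e = 2 cos k` and `sin k ≥ 0`. -/
def tau (e : ℝ) : ℂ := ⟨e / 2, √(1 - (e / 2) ^ 2)⟩

/-- `exp (-2 i k)`, where `e = 2 cos k`. -/
def node (e : ℝ) : ℂ := conj (tau e) ^ 2

lemma tau_im_pos {e : ℝ} (he : e ∈ Set.Ioo (-2 : ℝ) 2) : 0 < (tau e).im :=
  Real.sqrt_pos.mpr (by nlinarith [he.1, he.2])

lemma tau_im_le_one (e : ℝ) : (tau e).im ≤ 1 :=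
  Real.sqrt_le_one.mpr (by nlinarith [sq_nonneg (e / 2)])

lemma tau_mul_conj {e : ℝ} (he : e ∈ Set.Icc (-2 : ℝ) 2) : tau e * conj (tau e) = 1 := by
  have h : 0 ≤ 1 - (e / 2) ^ 2 := by nlinarith [he.1, he.2]
  apply Complex.ext <;> simp [tau]
  · have := Real.mul_self_sqrt h
    nlinarith
  · ring

lemma norm_tau {e : ℝ} (he : e ∈ Set.Icc (-2 : ℝ) 2) : ‖tau e‖ = 1 := by
  have h := congrArg norm (tau_mul_conj he)
  rw [norm_mul, RCLike.norm_conj, norm_one] at h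
  nlinarith [norm_nonneg (tau e)]

lemma norm_node {e : ℝ} (he : e ∈ Set.Icc (-2 : ℝ) 2) : ‖node e‖ = 1 := by
  simp [node, norm_tau he]

lemma tau_neg (e : ℝ) : tau (-e) = -conj (tau e) := by
  apply Complex.ext <;> simp [tau] <;> ring_nf

lemma node_neg (e : ℝ) : node (-e) = conj (node e) := by
  simp [node, tau_neg]

lemma node_two : node 2 = 1 := by
  have : tau 2 = 1 := by apply Complex.ext <;> simp [tau]
  simp [node, this]

lemma node_injOn : Set.InjOn node (Set.Ioc (-2 : ℝ) 2) := by
  intro a ha b hb hab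
  have hsq : tau a ^ 2 = tau b ^ 2 := by
    apply (starRingEnd ℂ).injective
    simpa [node] using hab
  rcases sq_eq_sq_iff_eq_or_eq_neg.mp hsq with h | h
  · have := congrArg Complex.re h
    simp only [tau] at this
    linarith
  · have h1 := congrArg Complex.re h
    have h2 := congrArg Complex.im h
    simp only [tau, Complex.neg_re, Complex.neg_im] at h1 h2
    have h3 : √(1 - (a / 2) ^ 2) = 0 := by
      linarith [Real.sqrt_nonneg (1 - (a / 2) ^ 2), Real.sqrt_nonneg (1 - (b / 2) ^ 2)]
    have h4 := Real.sqrt_eq_zero'.mp h3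
    nlinarith [ha.1, ha.2, hb.1, hb.2]

/-- The moment problem for the nodes of a finite set of energies symmetric about `0`. -/
lemma exists_real_moments (S : Finset ℝ) (hS : ∀ e ∈ S, e ∈ Set.Ioo (-2 : ℝ) 2)
    (hneg : ∀ e ∈ S, -e ∈ S) :
    ∃ κ : ℝ, 0 < κ ∧ ∀ r : ℝ → ℂ, (∀ e ∈ S, r (-e) = conj (r e)) → (∀ e ∈ S, ‖r e‖ ≤ 1) →
      ∃ v : ℕ → ℝ, (∀ m, |v m| ≤ κ) ∧ ∑ m ∈ Finset.range (S.card + 1), v m = 1 ∧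
        ∀ e ∈ S, ∑ m ∈ Finset.range (S.card + 1), (v m : ℂ) * node e ^ m = r e := by
  classical
  have h2 : (2 : ℝ) ∉ S := fun h => lt_irrefl _ (hS 2 h).2
  set A := insert (2 : ℝ) S with hA
  have hinj : Set.InjOn node (A : Set ℝ) := by
    refine node_injOn.mono fun e he => ?_
    rcases Finset.mem_insert.mp (Finset.mem_coe.mp he) with rfl | h
    · norm_num
    · exact ⟨(hS e h).1, (hS e h).2.le⟩
  have hcard : A.card = S.card + 1 := Finset.card_insert_of_notMem h2
  let c : ℕ → ℝ := fun m => ∑ e ∈ A, ‖(Lagrange.basis A node e).coeff m‖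
  refine ⟨1 + ∑ m ∈ Finset.range (S.card + 1), c m, ?_, ?_⟩
  · positivity
  intro r hr hr1
  let r' : ℝ → ℂ := fun e => if e = 2 then 1 else r e
  have hr'S : ∀ e ∈ S, r' e = r e := fun e he => by
    have : e ≠ 2 := fun h => h2 (h ▸ he)
    simp [r', this]
  let p := Lagrange.interpolate A node r'
  have hdeg : p.natDegree < S.card + 1 := by
    by_cases hp : p = 0
    · rw [hp]; simp
    · rw [← hcard, Polynomial.natDegree_lt_iff_degree_lt hp]
      exact Lagrange.degree_interpolate_lt _ hinj
  have heval : ∀ e ∈ A, ∑ m ∈ Finset.range (S.card + 1), p.coeff m * node e ^ m = r' e := by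
    intro e he
    rw [← Lagrange.eval_interpolate_at_node (r := r') hinj he]
    exact (Polynomial.eval_eq_sum_range' hdeg _).symm
  have hbd : ∀ m, ‖p.coeff m‖ ≤ c m := by
    intro m
    simp only [p, c, Lagrange.interpolate_apply, Polynomial.finsetSum_coeff,
      Polynomial.coeff_C_mul]
    refine (norm_sum_le _ _).trans (Finset.sum_le_sum fun e he => ?_)
    rw [norm_mul]
    have : ‖r' e‖ ≤ 1 := by
      rcases Finset.mem_insert.mp he with rfl | h
      · simp [r']
      · rw [hr'S e h]; exact hr1 e h
    exact mul_le_of_le_one_left (norm_nonneg _) this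
  refine ⟨fun m => (p.coeff m).re, fun m => ?_, ?_, fun e he => ?_⟩
  · have hc : ∀ i, 0 ≤ c i := fun i => Finset.sum_nonneg fun _ _ => norm_nonneg _
    by_cases hm : m < S.card + 1
    · have h1 := Finset.single_le_sum (f := c) (fun i _ => hc i) (Finset.mem_range.mpr hm)
      linarith [Complex.abs_re_le_norm (p.coeff m), hbd m]
    · dsimp only
      rw [Polynomial.coeff_eq_zero_of_natDegree_lt (by omega)]
      simp only [Complex.zero_re, abs_zero]
      have := Finset.sum_nonneg (s := Finset.range (S.card + 1)) fun i _ => hc i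
      linarith
  · have := congrArg Complex.re (heval 2 (Finset.mem_insert_self _ _))
    simpa [node_two, r'] using this
  · have h1 := heval e (Finset.mem_insert_of_mem he)
    have h3 := congrArg conj (heval (-e) (Finset.mem_insert_of_mem (hneg e he)))
    rw [hr'S e he] at h1
    rw [hr'S _ (hneg e he), hr e he, node_neg] at h3
    simp only [map_sum, map_mul, map_pow, Complex.conj_conj] at h3
    have h4 : ∀ m, (((p.coeff m).re : ℝ) : ℂ) = (p.coeff m + conj (p.coeff m)) / 2 := by
      intro m
      rw [Complex.add_conj]
      push_cast
      ring
    simp only [h4, add_div, add_mul, Finset.sum_add_distrib, div_mul_eq_mul_div,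
      ← Finset.sum_div, h1, h3]
    ring

/-- The slowly varying complex Prüfer amplitude of `u` at energy `e`. -/
def amp (u : ℕ → ℝ) (e : ℝ) (n : ℕ) : ℂ :=
  conj (tau e) ^ n * (u (n + 1) - conj (tau e) * u n)

lemma amp_succ {u : ℕ → ℝ} {e v : ℝ} {n : ℕ} (he : e ∈ Set.Ioo (-2 : ℝ) 2)
    (hu : u (n + 2) = (e - v) * u (n + 1) - u n) :
    amp u e (n + 1) = amp u e n + v * (I / (2 * (tau e).im) *
      (amp u e n - node e ^ (n + 1) * conj (amp u e n))) := by
  have hs : ((tau e).im : ℂ) ≠ 0 := by exact_mod_cast (tau_im_pos he).ne'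
  have h1 := tau_mul_conj (Set.Ioo_subset_Icc_self he)
  have h2 : tau e + conj (tau e) = e := by
    rw [Complex.add_conj]; simp [tau]; ring
  have h3 : tau e - conj (tau e) = 2 * (tau e).im * I := by
    rw [Complex.sub_conj]; push_cast; ring
  simp only [amp, node, hu, map_mul, map_sub, map_pow, Complex.conj_conj, Complex.conj_ofReal]
  push_cast
  have hpow : (conj (tau e) ^ 2) ^ (n + 1) * tau e ^ n = conj (tau e) ^ (n + 2) := by
    calc (conj (tau e) ^ 2) ^ (n + 1) * tau e ^ n
        = conj (tau e) ^ (n + 2) * (tau e * conj (tau e)) ^ n := by ring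
      _ = _ := by rw [h1]; ring
  rw [← mul_assoc ((conj (tau e) ^ 2) ^ (n + 1)), hpow]
  have hI : I / (2 * ((tau e).im : ℂ)) * (tau e - conj (tau e)) = -1 := by
    rw [h3]; field_simp; simp
  set τ := tau e
  set σ := conj τ
  rw [← h2]
  linear_combination (-(v * u (n + 1) * σ ^ (n + 1))) * hI +
    (σ ^ n * u (n + 1) + I / (2 * τ.im) * v * σ ^ n * (u (n + 1) - σ * u n)) * h1

/-- A weak linear perturbation of strength `x` per step moves `z 0` to first order by the
perturbation applied to `z 0` itself. -/
lemma first_order_expansion {z : ℕ → ℂ} {b : ℕ → ℂ → ℂ} {x : ℝ} {L : ℕ}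
    (hx : 2 * L * x ≤ 1) (hx0 : 0 ≤ x)
    (hz : ∀ m < L, z (m + 1) = z m + b m (z m))
    (hsub : ∀ m y y', b m y - b m y' = b m (y - y'))
    (hb : ∀ m y, ‖b m y‖ ≤ x * ‖y‖) :
    (∀ m ≤ L, ‖z m‖ ≤ 2 * ‖z 0‖) ∧
      ‖z L - z 0 - ∑ m ∈ Finset.range L, b m (z 0)‖ ≤ 2 * L ^ 2 * x ^ 2 * ‖z 0‖ := by
  have hdev : ∀ m ≤ L, ‖z m - z 0‖ ≤ 2 * m * x * ‖z 0‖ := by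
    intro m hm
    induction m with
    | zero => simp
    | succ m ih =>
      have ih := ih (by omega)
      have hm' : (m : ℝ) ≤ L := by exact_mod_cast (by omega : m ≤ L)
      have h1 : ‖z m‖ ≤ 2 * ‖z 0‖ := by
        have : ‖z m‖ ≤ ‖z m - z 0‖ + ‖z 0‖ := by
          simpa using norm_add_le (z m - z 0) (z 0)
        have h2 : 2 * m * x * ‖z 0‖ ≤ 1 * ‖z 0‖ := by gcongr; nlinarith
        linarith
      rw [hz m (by omega), add_sub_right_comm]
      refine (norm_add_le _ _).trans ?_
      have h3 := (hb m (z m)).trans (mul_le_mul_of_nonneg_left h1 hx0)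
      push_cast
      linarith
  constructor
  · intro m hm
    have h1 := hdev m hm
    have hm' : (m : ℝ) ≤ L := by exact_mod_cast hm
    have : ‖z m‖ ≤ ‖z m - z 0‖ + ‖z 0‖ := by simpa using norm_add_le (z m - z 0) (z 0)
    have h2 : 2 * m * x * ‖z 0‖ ≤ 1 * ‖z 0‖ := by gcongr; nlinarith
    linarith
  · have herr : ∀ m ≤ L, ‖z m - z 0 - ∑ i ∈ Finset.range m, b i (z 0)‖ ≤
        2 * m * L * x ^ 2 * ‖z 0‖ := by
      intro m hm
      induction m with
      | zero => simp
      | succ m ih =>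
        have ih := ih (by omega)
        have hm' : (m : ℝ) ≤ L := by exact_mod_cast (by omega : m ≤ L)
        rw [Finset.sum_range_succ, hz m (by omega)]
        have : z m + b m (z m) - z 0 - (∑ i ∈ Finset.range m, b i (z 0) + b m (z 0)) =
            (z m - z 0 - ∑ i ∈ Finset.range m, b i (z 0)) + b m (z m - z 0) := by
          rw [← hsub]; ring
        rw [this]
        refine (norm_add_le _ _).trans ?_
        have h3 := (hb m (z m - z 0)).trans
          (mul_le_mul_of_nonneg_left (hdev m (by omega)) hx0)
        have h4 : x * (2 * m * x * ‖z 0‖) ≤ 2 * L * x ^ 2 * ‖z 0‖ := by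
          calc x * (2 * m * x * ‖z 0‖) = 2 * m * x ^ 2 * ‖z 0‖ := by ring
            _ ≤ _ := by gcongr
        push_cast
        linarith
    refine (herr L le_rfl).trans_eq ?_
    ring

/-- The real-linear map fixing `1` and sending `I` to a primitive cube root of unity. -/
def skew (p : ℂ) : ℂ := p.re + p.im * (⟨-1 / 2, √3 / 2⟩ : ℂ)

lemma normSq_skew (p : ℂ) : Complex.normSq (skew p) = p.re ^ 2 - p.re * p.im + p.im ^ 2 := by
  have h3 : √3 * √3 = 3 := Real.mul_self_sqrt (by norm_num)
  simp only [skew, Complex.normSq_apply, Complex.add_re, Complex.mul_re, Complex.add_im,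
    Complex.mul_im, Complex.ofReal_re, Complex.ofReal_im]
  linear_combination (p.im ^ 2 / 4) * h3

lemma skew_add (p q : ℂ) : skew (p + q) = skew p + skew q := by
  simp only [skew, Complex.add_re, Complex.add_im]
  push_cast
  ring

lemma norm_skew_le (p : ℂ) : ‖skew p‖ ≤ 2 * ‖p‖ := by
  rw [← abs_of_nonneg (norm_nonneg (skew p)), ← abs_of_nonneg (by positivity : 0 ≤ 2 * ‖p‖),
    ← sq_le_sq, mul_pow, Complex.sq_norm, Complex.sq_norm, normSq_skew, Complex.normSq_apply]
  nlinarith [sq_nonneg (p.re + p.im), sq_nonneg p.re, sq_nonneg p.im]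

lemma norm_le_skew (p : ℂ) : ‖p‖ ≤ 2 * ‖skew p‖ := by
  rw [← abs_of_nonneg (norm_nonneg p), ← abs_of_nonneg (by positivity : 0 ≤ 2 * ‖skew p‖),
    ← sq_le_sq, mul_pow, Complex.sq_norm, Complex.sq_norm, normSq_skew, Complex.normSq_apply]
  nlinarith [sq_nonneg (p.re - p.im), sq_nonneg p.re, sq_nonneg p.im]

/-- The damped oscillator `p' = I * (p - Im p)` contracts the norm of `skew p`. -/
lemma norm_skew_damped (p : ℂ) {t : ℝ} (ht0 : 0 ≤ t) (ht : t ≤ 1 / 2) :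
    ‖skew (p + t * (I * (p - p.im)))‖ ≤ (1 - t / 4) * ‖skew p‖ := by
  have h0 : 0 ≤ (1 - t / 4) * ‖skew p‖ := mul_nonneg (by linarith) (norm_nonneg _)
  rw [← abs_of_nonneg (norm_nonneg (skew (p + _))), ← abs_of_nonneg h0, ← sq_le_sq, mul_pow,
    Complex.sq_norm, Complex.sq_norm, normSq_skew]
  have : (p + t * (I * (p - p.im))).re ^ 2 - (p + t * (I * (p - p.im))).re *
      (p + t * (I * (p - p.im))).im + (p + t * (I * (p - p.im))).im ^ 2 =
      (1 - t + t ^ 2) * Complex.normSq (skew p) := by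
    rw [normSq_skew]
    simp
    ring
  rw [this]
  exact mul_le_mul_of_nonneg_right (by nlinarith) (Complex.normSq_nonneg _)

/-- A quantity comparable to `‖z‖ ^ 2`, adapted to the feedback law used for the pair of
amplitudes `z`, `w` at opposite energies. -/
def lyap (z w : ℂ) : ℝ := ‖skew (z * w)‖ * ‖z‖ / ‖w‖

lemma lyap_nonneg (z w : ℂ) : 0 ≤ lyap z w := by
  unfold lyap; positivity

lemma sq_norm_le_lyap {z w : ℂ} (hw : w ≠ 0) : ‖z‖ ^ 2 ≤ 2 * lyap z w := by
  have hw' : 0 < ‖w‖ := norm_pos_iff.mpr hw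
  have h := norm_le_skew (z * w)
  rw [norm_mul] at h
  rw [lyap, ← mul_div_assoc, le_div_iff₀ hw']
  nlinarith [norm_nonneg z]

set_option maxHeartbeats 400000 in
lemma lyap_contract {s K : ℝ} (hs0 : 0 < s) (hs1 : s ≤ 1) (hK : 0 ≤ K) :
    ∀ᶠ δ : ℝ in 𝓝[>] 0, ∀ z w z'  w' : ℂ, z ≠ 0 → w ≠ 0 →
      ‖z' - z - δ * (I / (2 * s) * (z - (z * w).im / w))‖ ≤ K * δ ^ 2 * ‖z‖ →
      ‖w' - w - δ * (I / (2 * s) * (w - (z * w).im / z))‖ ≤ K * δ ^ 2 * ‖w‖ →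
      lyap z' w' ≤ (1 - δ / 8) * lyap z w := by
  set K₂ := 1 / s ^ 2 + 5 * K with hK₂
  have hK₂0 : 0 ≤ K₂ := by positivity
  have hsmall : ∀ c : ℝ, ∀ ε : ℝ, 0 < ε → ∀ᶠ δ : ℝ in 𝓝[>] 0, c * δ < ε := by
    intro c ε hε
    have : Tendsto (fun δ : ℝ => c * δ) (𝓝[>] 0) (𝓝 0) := by
      have : Tendsto (fun δ : ℝ => c * δ) (𝓝 0) (𝓝 (c * 0)) :=
        (continuous_const.mul continuous_id).tendsto 0
      rw [mul_zero] at this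
      exact this.mono_left nhdsWithin_le_nhds
    exact this.eventually (gt_mem_nhds hε)
  filter_upwards [self_mem_nhdsWithin, hsmall (1 / s) (1 / 4) (by norm_num),
    hsmall K (1 / 128) (by norm_num), hsmall K₂ (1 / 128) (by norm_num)]
    with δ hδ0 hδs hδK hδK₂ z w z' w' hz hw hz' hw'
  have hδ0 : 0 < δ := hδ0
  have hzn : 0 < ‖z‖ := norm_pos_iff.mpr hz
  have hwn : 0 < ‖w‖ := norm_pos_iff.mpr hw
  have hsC : (s : ℂ) ≠ 0 := by exact_mod_cast hs0.ne'
  set p := z * w with hp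
  have hp0 : p ≠ 0 := mul_ne_zero hz hw
  have hpn : 0 < ‖p‖ := norm_pos_iff.mpr hp0
  set α : ℂ := I / (2 * s) * (1 - p.im / p) with hα
  have hαn : ‖α‖ ≤ 1 / s := by
    have h1 : ‖(1 : ℂ) - p.im / p‖ ≤ 2 := by
      refine (norm_sub_le _ _).trans ?_
      have : ‖(p.im : ℂ) / p‖ ≤ 1 := by
        rw [norm_div, div_le_one hpn, Complex.norm_real, Real.norm_eq_abs]
        exact Complex.abs_im_le_norm p
      rw [norm_one]; linarith
    have h2 : ‖I / (2 * (s : ℂ))‖ = 1 / (2 * s) := by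
      rw [norm_div, Complex.norm_I, norm_mul, Complex.norm_real, Real.norm_eq_abs,
        abs_of_pos hs0]
      norm_num
    rw [hα, norm_mul, h2]
    calc 1 / (2 * s) * _ ≤ 1 / (2 * s) * 2 := by gcongr
      _ = 1 / s := by field_simp
  have hδα : ‖(δ : ℂ) * α‖ ≤ 1 / s * δ := by
    rw [norm_mul, Complex.norm_real, Real.norm_eq_abs, abs_of_pos hδ0, mul_comm]
    gcongr
  set β : ℂ := δ * α with hβ
  have hδ1 : δ < 1 / 4 := by
    have : 1 ≤ 1 / s := by rw [le_div_iff₀ hs0]; linarith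
    nlinarith
  obtain ⟨a, ha, haz⟩ : ∃ a : ℂ, ‖a‖ ≤ K * δ ^ 2 ∧ z' = z * (1 + β + a) := by
    refine ⟨z' / z - 1 - β, ?_, by field_simp; ring⟩
    have : z' / z - 1 - β = (z' - z - δ * (I / (2 * s) * (z - p.im / w))) / z := by
      rw [hβ, hα, hp]; field_simp
    rw [this, norm_div, div_le_iff₀ hzn]
    exact hz'
  obtain ⟨b, hb, hbw⟩ : ∃ b : ℂ, ‖b‖ ≤ K * δ ^ 2 ∧ w' = w * (1 + β + b) := by
    refine ⟨w' / w - 1 - β, ?_, by field_simp; ring⟩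
    have : w' / w - 1 - β = (w' - w - δ * (I / (2 * s) * (w - p.im / z))) / w := by
      rw [hβ, hα, hp]; field_simp
    rw [this, norm_div, div_le_iff₀ hwn]
    exact hw'
  have hKδ : K * δ ^ 2 ≤ 1 / 128 * δ := by nlinarith
  have hKδ' : K * δ ^ 2 ≤ 1 / 4 := by linarith
  have hβ4 : ‖β‖ ≤ 1 / 4 := by linarith
  have hprod : z' * w' = (p + (δ / s : ℝ) * (I * (p - p.im))) +
      p * (β ^ 2 + (a + b) * (1 + β) + a * b) := by
    have h1 : ((δ / s : ℝ) : ℂ) * (I * (p - p.im)) = 2 * β * p := by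
      rw [hβ, hα]; push_cast; field_simp
    rw [h1, haz, hbw, hp]; ring
  have hρ : ‖β ^ 2 + (a + b) * (1 + β) + a * b‖ ≤ K₂ * δ ^ 2 := by
    have h1 : ‖β ^ 2‖ ≤ 1 / s ^ 2 * δ ^ 2 := by
      rw [norm_pow]
      calc ‖β‖ ^ 2 ≤ (1 / s * δ) ^ 2 := by gcongr
        _ = _ := by ring
    have h2 : ‖(a + b) * (1 + β)‖ ≤ (2 * (K * δ ^ 2)) * 2 := by
      rw [norm_mul]
      have h3 : ‖a + b‖ ≤ 2 * (K * δ ^ 2) := (norm_add_le _ _).trans (by linarith)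
      have h4 : ‖1 + β‖ ≤ 2 := (norm_add_le _ _).trans (by rw [norm_one]; linarith)
      gcongr
    have h5 : ‖a * b‖ ≤ K * δ ^ 2 * 1 := by
      rw [norm_mul]
      have : ‖b‖ ≤ 1 := by linarith
      gcongr
    refine (norm_add₃_le).trans ?_
    rw [hK₂]
    linarith
  have hskew : ‖skew (z' * w')‖ ≤ (1 - δ / 4 + 4 * K₂ * δ ^ 2) * ‖skew p‖ := by
    rw [hprod, skew_add]
    refine (norm_add_le _ _).trans ?_
    have hts : δ / s = 1 / s * δ := by ring
    have h1 := norm_skew_damped p (t := δ / s) (by positivity) (by rw [hts]; linarith)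
    have h2 : δ ≤ δ / s := by rw [le_div_iff₀ hs0]; nlinarith
    have h3 : ‖skew (p * (β ^ 2 + (a + b) * (1 + β) + a * b))‖ ≤
        2 * (2 * ‖skew p‖ * (K₂ * δ ^ 2)) := by
      refine (norm_skew_le _).trans ?_
      rw [norm_mul]
      have := norm_le_skew p
      gcongr
    have h4 : (1 - δ / s / 4) * ‖skew p‖ ≤ (1 - δ / 4) * ‖skew p‖ := by gcongr
    linarith
  have hhalf : 1 / 2 ≤ ‖1 + β + b‖ := by
    have h1 : ‖(1 : ℂ)‖ ≤ ‖1 + β + b‖ + ‖β + b‖ := by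
      have := norm_sub_le (1 + β + b) (β + b)
      rwa [show 1 + β + b - (β + b) = 1 by ring] at this
    have h2 := norm_add_le β b
    rw [norm_one] at h1
    linarith
  have hratio : ‖z'‖ / ‖w'‖ ≤ (1 + 4 * K * δ ^ 2) * (‖z‖ / ‖w‖) := by
    have h1 : ‖1 + β + a‖ ≤ (1 + 4 * K * δ ^ 2) * ‖1 + β + b‖ := by
      have h2 : ‖1 + β + a‖ ≤ ‖1 + β + b‖ + ‖a - b‖ := by
        have := norm_add_le (1 + β + b) (a - b)
        rwa [show 1 + β + b + (a - b) = 1 + β + a by ring] at this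
      have h3 := norm_sub_le a b
      nlinarith [mul_nonneg hK (sq_nonneg δ)]
    rw [haz, hbw, norm_mul, norm_mul, ← mul_div_assoc, div_le_div_iff₀ (by positivity) hwn]
    calc ‖z‖ * ‖1 + β + a‖ * ‖w‖ ≤ ‖z‖ * ((1 + 4 * K * δ ^ 2) * ‖1 + β + b‖) * ‖w‖ := by gcongr
      _ = _ := by ring
  have hfac0 : 0 ≤ 1 - δ / 4 + 4 * K₂ * δ ^ 2 := by
    have := mul_nonneg hK₂0 (sq_nonneg δ)
    linarith
  have hfac : (1 - δ / 4 + 4 * K₂ * δ ^ 2) * (1 + 4 * K * δ ^ 2) ≤ 1 - δ / 8 := by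
    have h1 : K₂ * δ ^ 2 ≤ 1 / 128 * δ := by nlinarith
    have h2 : 1 - δ / 4 + 4 * K₂ * δ ^ 2 ≤ 1 - δ / 4 + δ / 32 := by linarith
    have h3 : 1 + 4 * K * δ ^ 2 ≤ 1 + δ / 32 := by linarith
    calc _ ≤ (1 - δ / 4 + δ / 32) * (1 + δ / 32) :=
          mul_le_mul h2 h3 (by positivity) (by linarith)
      _ = 1 - δ * (3 / 16) - 7 / 1024 * δ ^ 2 := by ring
      _ ≤ _ := by linarith [sq_nonneg δ]
  calc lyap z' w' = ‖skew (z' * w')‖ * (‖z'‖ / ‖w'‖) := by rw [lyap, mul_div_assoc]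
    _ ≤ ((1 - δ / 4 + 4 * K₂ * δ ^ 2) * ‖skew p‖) *
        ((1 + 4 * K * δ ^ 2) * (‖z‖ / ‖w‖)) := by gcongr
    _ = ((1 - δ / 4 + 4 * K₂ * δ ^ 2) * (1 + 4 * K * δ ^ 2)) * lyap z w := by
      rw [lyap]; ring
    _ ≤ _ := by
      gcongr
      exact lyap_nonneg z w

/-- The solution of the eigen-equation at energy `e` with boundary phase `φ`. -/
def sol (V : ℕ → ℝ) (φ e : ℝ) : ℕ → ℝ
  | 0 => Real.cos φ
  | 1 => Real.sin φ
  | n + 2 => (e - V (n + 1)) * sol V φ e (n + 1) - sol V φ e n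

lemma sol_congr {V W : ℕ → ℝ} {φ e : ℝ} {N : ℕ} (h : ∀ i ≤ N, V i = W i) :
    ∀ n ≤ N + 1, sol V φ e n = sol W φ e n
  | 0, _ => rfl
  | 1, _ => rfl
  | n + 2, hn => by
    rw [sol, sol, sol_congr h (n + 1) (by omega), sol_congr h n (by omega), h (n + 1) (by omega)]

lemma sol_ne_zero (V : ℕ → ℝ) (φ e : ℝ) (n : ℕ) :
    ¬(sol V φ e n = 0 ∧ sol V φ e (n + 1) = 0) := by
  induction n with
  | zero =>
    rintro ⟨h0, h1⟩
    simp only [sol] at h0 h1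
    have := Real.sin_sq_add_cos_sq φ
    simp [h0, h1] at this
  | succ n ih =>
    rintro ⟨h0, h1⟩
    refine ih ⟨?_, h0⟩
    rw [sol, h0] at h1
    linarith

/-- The Prüfer amplitude at energy `e` of the solution with boundary phase `φ e`. -/
def solAmp (V : ℕ → ℝ) (φ : ℝ → ℝ) (e : ℝ) (n : ℕ) : ℂ := amp (sol V (φ e) e) e n

lemma solAmp_congr {V W : ℕ → ℝ} {φ : ℝ → ℝ} {N n : ℕ} (h : ∀ i ≤ N, V i = W i) (hn : n ≤ N)
    (e : ℝ) : solAmp V φ e n = solAmp W φ e n := by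
  rw [solAmp, solAmp, amp, amp, sol_congr h n (by omega), sol_congr h (n + 1) (by omega)]

lemma norm_amp {u : ℕ → ℝ} {e : ℝ} (he : e ∈ Set.Ioo (-2 : ℝ) 2) (n : ℕ) :
    ‖amp u e n‖ = ‖(u (n + 1) : ℂ) - conj (tau e) * u n‖ := by
  rw [amp, norm_mul, norm_pow, RCLike.norm_conj, norm_tau (Set.Ioo_subset_Icc_self he), one_pow,
    one_mul]

lemma abs_mul_le_norm_amp {u : ℕ → ℝ} {e : ℝ} (he : e ∈ Set.Ioo (-2 : ℝ) 2) (n : ℕ) :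
    |u n| * (tau e).im ≤ ‖amp u e n‖ := by
  rw [norm_amp he]
  refine le_trans (le_of_eq ?_) (Complex.abs_im_le_norm _)
  simp [abs_mul, abs_of_pos (tau_im_pos he), mul_comm]

lemma solAmp_ne_zero (V : ℕ → ℝ) (φ : ℝ → ℝ) {e : ℝ} (he : e ∈ Set.Ioo (-2 : ℝ) 2) (n : ℕ) :
    solAmp V φ e n ≠ 0 := by
  intro h
  have h0 := abs_mul_le_norm_amp (u := sol V (φ e) e) he n
  have h1 := norm_amp (u := sol V (φ e) e) he n
  rw [solAmp] at h
  rw [h, norm_zero] at h0 h1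
  have hu : sol V (φ e) e n = 0 := by
    have := tau_im_pos he
    exact abs_eq_zero.mp (le_antisymm (by nlinarith [abs_nonneg (sol V (φ e) e n)])
      (abs_nonneg _))
  refine sol_ne_zero V (φ e) e n ⟨hu, ?_⟩
  rw [hu] at h1
  simpa using h1.symm

/-- On the window `[n, n + L]`, the amplitudes at the energies in `S` do not double, and overall
they decay at least like `1 / n`. -/
def IsDecayWindow (φ : ℝ → ℝ) (S : Finset ℝ) (V : ℕ → ℝ) (n L : ℕ) : Prop :=
  ∀ e ∈ S, lyap (solAmp V φ e (n + L)) (solAmp V φ (-e) (n + L)) * ((n + L : ℕ) : ℝ) ^ 2 ≤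
      lyap (solAmp V φ e n) (solAmp V φ (-e) n) * (n : ℝ) ^ 2 ∧
    ∀ m ≤ L, ‖solAmp V φ e (n + m)‖ ≤ 2 * ‖solAmp V φ e n‖

lemma IsDecayWindow.congr {φ : ℝ → ℝ} {S : Finset ℝ} {V W : ℕ → ℝ} {n L : ℕ}
    (hV : IsDecayWindow φ S V n L) (h : ∀ i ≤ n + L, V i = W i) : IsDecayWindow φ S W n L := by
  intro e he
  obtain ⟨h1, h2⟩ := hV e he
  have hc := fun k (hk : k ≤ n + L) e => solAmp_congr (φ := φ) h hk e
  rw [hc _ le_rfl, hc _ le_rfl, hc n (by omega), hc n (by omega)] at h1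
  refine ⟨h1, fun m hm => ?_⟩
  rw [← hc _ (by omega), ← hc n (by omega)]
  exact h2 m hm

/-- Any potential can be continued past `n` over an admissible decay window. -/
def HasDecayWindow (h : ℕ → ℝ) (φ : ℝ → ℝ) (S : Finset ℝ) (n : ℕ) : Prop :=
  ∀ V : ℕ → ℝ, ∃ L : ℕ, 1 ≤ L ∧ L ≤ n ∧ ∃ W : ℕ → ℝ, (∀ i ≤ n, W i = V i) ∧
    (∀ i, n < i → i ≤ n + L → |W i| ≤ h i / (1 + (i : ℝ))) ∧ IsDecayWindow φ S W n L

lemma hasDecayWindow_empty {h : ℕ → ℝ} (hpos : ∀ n, 0 < h n) (φ : ℝ → ℝ) {n : ℕ} (hn : 1 ≤ n) :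
    HasDecayWindow h φ ∅ n := by
  intro V
  refine ⟨1, le_rfl, hn, fun i => if i ≤ n then V i else 0, fun i hi => if_pos hi, ?_, ?_⟩
  · intro i hi _
    have := hpos i
    dsimp only
    rw [if_neg (by omega), abs_zero]
    positivity
  · intro e he
    simp at he

/-- The effect, over a window, of a perturbation solving the moment problem for the feedback law. -/
lemma window_expansion {V v : ℕ → ℝ} {φ : ℝ → ℝ} {δ κ : ℝ} {n L : ℕ} {e : ℝ}
    (he : e ∈ Set.Ioo (-2 : ℝ) 2) (hδ : 0 ≤ δ) (hV : ∀ m < L, V (n + m + 1) = δ * v m)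
    (hv : ∀ m, |v m| ≤ κ) (hsmall : 2 * L * (κ / (tau e).im * δ) ≤ 1)
    (hsum : ∑ m ∈ Finset.range L, v m = 1) {g : ℂ}
    (hmom : node e ^ (n + 1) * ∑ m ∈ Finset.range L, (v m : ℂ) * node e ^ m = g) :
    (∀ m ≤ L, ‖solAmp V φ e (n + m)‖ ≤ 2 * ‖solAmp V φ e n‖) ∧
      ‖solAmp V φ e (n + L) - solAmp V φ e n - δ * (I / (2 * (tau e).im) *
        (solAmp V φ e n - g * conj (solAmp V φ e n)))‖ ≤
        2 * L ^ 2 * (κ / (tau e).im) ^ 2 * δ ^ 2 * ‖solAmp V φ e n‖ := by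
  have hs := tau_im_pos he
  have hκ : 0 ≤ κ := (abs_nonneg _).trans (hv 0)
  let b : ℕ → ℂ → ℂ := fun m y =>
    ((δ * v m : ℝ) : ℂ) * (I / (2 * (tau e).im) * (y - node e ^ (n + m + 1) * conj y))
  have hb : ∀ m y, ‖b m y‖ ≤ κ / (tau e).im * δ * ‖y‖ := by
    intro m y
    have h1 : ‖y - node e ^ (n + m + 1) * conj y‖ ≤ 2 * ‖y‖ := by
      refine (norm_sub_le _ _).trans ?_
      rw [norm_mul, norm_pow, norm_node (Set.Ioo_subset_Icc_self he), RCLike.norm_conj, one_pow]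
      linarith
    have h2 : ‖I / (2 * ((tau e).im : ℂ))‖ = 1 / (2 * (tau e).im) := by
      rw [norm_div, Complex.norm_I, norm_mul, Complex.norm_real, Real.norm_eq_abs, abs_of_pos hs]
      norm_num
    rw [norm_mul, norm_mul, h2, Complex.norm_real, Real.norm_eq_abs, abs_mul, abs_of_nonneg hδ]
    calc δ * |v m| * (1 / (2 * (tau e).im) * ‖y - node e ^ (n + m + 1) * conj y‖)
        ≤ δ * κ * (1 / (2 * (tau e).im) * (2 * ‖y‖)) := by
          have := hv m
          gcongr
      _ = _ := by field_simp
  obtain ⟨h1, h2⟩ := first_order_expansion (z := fun m => solAmp V φ e (n + m)) (b := b)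
    (L := L) hsmall (by positivity)
    (by
      intro m hm
      have := amp_succ (u := sol V (φ e) e) (v := V (n + m + 1)) (n := n + m) he rfl
      rw [hV m hm] at this
      exact this)
    (by
      intro m y y'
      simp only [b, map_sub]
      ring) hb
  refine ⟨h1, ?_⟩
  have hbsum : ∑ m ∈ Finset.range L, b m (solAmp V φ e n) = δ * (I / (2 * (tau e).im) *
        (solAmp V φ e n - g * conj (solAmp V φ e n))) := by
    have hsumC : ∑ m ∈ Finset.range L, (v m : ℂ) = 1 := by exact_mod_cast hsum
    set y := solAmp V φ e n
    calc ∑ m ∈ Finset.range L, b m y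
        = ∑ m ∈ Finset.range L, (δ * (I / (2 * (tau e).im)) * (v m * y) -
            δ * (I / (2 * (tau e).im)) * (node e ^ (n + 1) * (v m * node e ^ m)) * conj y) := by
          refine Finset.sum_congr rfl fun m _ => ?_
          simp only [b]
          push_cast
          ring
      _ = δ * (I / (2 * (tau e).im)) * ((∑ m ∈ Finset.range L, (v m : ℂ)) * y) -
            δ * (I / (2 * (tau e).im)) * (node e ^ (n + 1) *
              ∑ m ∈ Finset.range L, (v m : ℂ) * node e ^ m) * conj y := by
          rw [Finset.sum_sub_distrib, ← Finset.mul_sum, ← Finset.sum_mul, ← Finset.sum_mul,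
            ← Finset.mul_sum, ← Finset.mul_sum]
      _ = _ := by rw [hmom, hsumC]; ring
  simp only [add_zero] at h2
  rw [hbsum] at h2
  refine h2.trans_eq ?_
  ring

lemma eventually_hasDecayWindow {h : ℕ → ℝ} (hmono : Monotone h) (htend : Tendsto h atTop atTop)
    (φ : ℝ → ℝ) (S : Finset ℝ) (hS : ∀ e ∈ S, e ∈ Set.Ioo (-2 : ℝ) 2) (hneg : ∀ e ∈ S, -e ∈ S) :
    ∀ᶠ n in atTop, HasDecayWindow h φ S n := by
  obtain ⟨κ, hκ, hmoments⟩ := exists_real_moments S hS hneg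
  set L := S.card + 1 with hL
  have hδtend : Tendsto (fun n : ℕ => 16 * (L : ℝ) / n) atTop (𝓝[>] 0) := by
    refine tendsto_nhdsWithin_iff.mpr ⟨tendsto_const_div_atTop_nhds_zero_nat _, ?_⟩
    filter_upwards [eventually_ge_atTop 1] with n hn
    have : (0 : ℝ) < n := by exact_mod_cast hn
    have : (0 : ℝ) < L := by positivity
    exact Set.mem_Ioi.mpr (by positivity)
  have hcontract := hδtend.eventually <| (Finset.eventually_all S).mpr fun e he =>
    lyap_contract (K := 2 * L ^ 2 * (κ / (tau e).im) ^ 2) (tau_im_pos (hS e he))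
      (tau_im_le_one e) (by positivity)
  have hsmall : ∀ᶠ n : ℕ in atTop, ∀ e ∈ S,
      2 * L * (κ / (tau e).im * (16 * (L : ℝ) / n)) ≤ 1 := by
    refine (Finset.eventually_all S).mpr fun e he => ?_
    have h1 : Tendsto (fun n : ℕ => 2 * L * (κ / (tau e).im * (16 * (L : ℝ) / n))) atTop
        (𝓝 (2 * L * (κ / (tau e).im * 0))) :=
      ((hδtend.mono_right nhdsWithin_le_nhds).const_mul _).const_mul _
    rw [mul_zero, mul_zero] at h1
    filter_upwards [h1.eventually (gt_mem_nhds one_pos)] with n hn using hn.le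
  filter_upwards [hcontract, hsmall, eventually_ge_atTop (L + 1),
    htend.eventually_ge_atTop (32 * κ * L)] with n hc hsm hn hh V
  set δ : ℝ := 16 * (L : ℝ) / n with hδ
  have hn0 : (0 : ℝ) < n := by exact_mod_cast (by omega : 0 < n)
  have hnL : (L : ℝ) + 1 ≤ n := by exact_mod_cast hn
  have hδ0 : 0 ≤ δ := by positivity
  have hz := fun e (he : e ∈ S) => solAmp_ne_zero V φ (hS e he) n
  let z : ℝ → ℂ := fun e => solAmp V φ e n
  let g : ℝ → ℂ := fun e => (z e * z (-e)).im / (conj (z e) * z (-e))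
  obtain ⟨v, hv, hsum, hmom⟩ := hmoments (fun e => conj (node e) ^ (n + 1) * g e)
    (by
      intro e he
      simp only [g, node_neg, neg_neg, map_mul, map_pow, map_div₀, Complex.conj_conj,
        Complex.conj_ofReal]
      rw [mul_comm (z (-e)) (z e), mul_comm (z e) (conj (z (-e)))])
    (by
      intro e he
      rw [norm_mul, norm_pow, RCLike.norm_conj,
        norm_node (Set.Ioo_subset_Icc_self (hS e he)), one_pow, one_mul, norm_div, norm_mul,
        RCLike.norm_conj, ← norm_mul, Complex.norm_real]
      exact div_le_one_of_le₀ (Complex.abs_im_le_norm _) (norm_nonneg _))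
  let W : ℕ → ℝ := fun i => if i ≤ n then V i else δ * v (i - (n + 1))
  have hWV : ∀ i ≤ n, W i = V i := fun i hi => if_pos hi
  have hWz : ∀ e, solAmp W φ e n = z e := solAmp_congr hWV le_rfl
  have hexp : ∀ e ∈ S, (∀ m ≤ L, ‖solAmp W φ e (n + m)‖ ≤ 2 * ‖z e‖) ∧
      ‖solAmp W φ e (n + L) - z e - δ * (I / (2 * (tau e).im) *
        (z e - (z e * z (-e)).im / z (-e)))‖ ≤
        2 * L ^ 2 * (κ / (tau e).im) ^ 2 * δ ^ 2 * ‖z e‖ := by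
    intro e he
    have hgz : g e * conj (z e) = (z e * z (-e)).im / z (-e) := by
      have h1 : conj (z e) ≠ 0 := (map_ne_zero _).mpr (hz e he)
      have h2 : z (-e) ≠ 0 := hz (-e) (hneg e he)
      simp only [g]
      field_simp
    have := window_expansion (V := W) (v := v) (φ := φ) (n := n) (L := L) (g := g e)
      (hS e he) hδ0
      (by
        intro m _
        simp only [W]
        rw [if_neg (by omega), show n + m + 1 - (n + 1) = m by omega])
      hv (hsm e he) hsum
      (by
        rw [hmom e he, ← mul_assoc, ← mul_pow, Complex.mul_conj, Complex.normSq_eq_norm_sq,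
          norm_node (Set.Ioo_subset_Icc_self (hS e he))]
        simp)
    rwa [hWz, hgz] at this
  refine ⟨L, by omega, by omega, W, hWV, ?_, ?_⟩
  · intro i hi hiL
    simp only [W]
    rw [if_neg (by omega), abs_mul, abs_of_nonneg hδ0]
    have hi' : (i : ℝ) ≤ n + L := by exact_mod_cast hiL
    have hhi : 32 * κ * L ≤ h i := hh.trans (hmono hi.le)
    rw [le_div_iff₀ (by positivity)]
    calc δ * |v (i - (n + 1))| * (1 + (i : ℝ)) ≤ δ * κ * (2 * n) := by
          have := hv (i - (n + 1))
          gcongr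
          linarith
      _ = 32 * κ * L := by rw [hδ]; field_simp; ring
      _ ≤ h i := hhi
  · intro e he
    obtain ⟨h1, h2⟩ := hexp e he
    have h3 := (hexp (-e) (hneg e he)).2
    have him : (tau (-e)).im = (tau e).im := by simp [tau_neg]
    rw [neg_neg, him, mul_comm (z (-e)) (z e)] at h3
    have h4 := hc e he (z e) (z (-e)) _ _ (hz e he) (hz (-e) (hneg e he)) h2 h3
    rw [hWz, hWz]
    refine ⟨?_, h1⟩
    have hfac : (1 - δ / 8) * ((n + L : ℕ) : ℝ) ^ 2 ≤ (n : ℝ) ^ 2 := by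
      have : δ / 8 = 2 * L / n := by rw [hδ]; ring
      rw [this]
      have h5 : (1 - 2 * L / (n : ℝ)) * ((n + L : ℕ) : ℝ) ^ 2 =
          (n : ℝ) ^ 2 - 3 * L ^ 2 - 2 * L ^ 3 / n := by
        push_cast
        field_simp
        ring
      rw [h5]
      have : 0 ≤ 2 * (L : ℝ) ^ 3 / n := by positivity
      nlinarith [sq_nonneg (L : ℝ)]
    calc _ ≤ (1 - δ / 8) * lyap (z e) (z (-e)) * ((n + L : ℕ) : ℝ) ^ 2 := by gcongr
      _ = lyap (z e) (z (-e)) * ((1 - δ / 8) * ((n + L : ℕ) : ℝ) ^ 2) := by ring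
      _ ≤ _ := mul_le_mul_of_nonneg_left hfac (lyap_nonneg _ _)

/-- Slowly moving through a sequence of eventually true statements. -/
lemma exists_slow_schedule {α : Type*} {P : α → ℕ → Prop} {a₀ : α} (a : ℕ → α)
    (h0 : ∀ n, 1 ≤ n → P a₀ n) (h : ∀ N, ∀ᶠ n in atTop, P (a N) n) :
    ∃ σ : ℕ → α, (∀ n, 1 ≤ n → P (σ n) n) ∧
      ∀ N, ∀ᶠ n in atTop, ∃ M, N ≤ M ∧ σ n = a M := by
  classical
  choose T hT using fun N => eventually_atTop.mp (h N)
  let l : ℕ → ℕ := fun n => Nat.findGreatest (fun N => T N ≤ n) n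
  refine ⟨fun n => if T (l n) ≤ n then a (l n) else a₀, fun n hn => ?_, fun N => ?_⟩
  · dsimp only
    split_ifs with hl
    · exact hT _ _ hl
    · exact h0 n hn
  · filter_upwards [eventually_ge_atTop (max N (T N))] with n hn
    have hN : N ≤ n := le_of_max_le_left hn
    have hTN : T N ≤ n := le_of_max_le_right hn
    exact ⟨l n, Nat.le_findGreatest hN hTN,
      if_pos (Nat.findGreatest_spec (P := fun N => T N ≤ n) hN hTN)⟩

/-- Consecutive continuations over decay windows, glued to a single potential. -/
lemma exists_potential {h : ℕ → ℝ} (hpos : ∀ n, 0 < h n) {φ : ℝ → ℝ} {σ : ℕ → Finset ℝ}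
    (hσ : ∀ n, 1 ≤ n → HasDecayWindow h φ (σ n) n) :
    ∃ (V : ℕ → ℝ) (t : ℕ → ℕ), (∀ n, |V n| ≤ h n / (1 + (n : ℝ))) ∧ StrictMono t ∧
      ∀ m, 1 ≤ t m ∧ t (m + 1) ≤ 2 * t m ∧ IsDecayWindow φ (σ (t m)) V (t m) (t (m + 1) - t m) := by
  choose L hL1 hLn W hWV hWh hW using hσ
  let X := {p : ℕ × (ℕ → ℝ) // 1 ≤ p.1}
  let next : X → X := fun p =>
    ⟨(p.1.1 + L p.1.1 p.2 p.1.2, W p.1.1 p.2 p.1.2), p.2.trans (Nat.le_add_right _ _)⟩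
  let st : ℕ → X := fun m => next^[m] ⟨(1, fun _ => 0), le_rfl⟩
  have hst : ∀ m, st (m + 1) = next (st m) := fun m => Function.iterate_succ_apply' _ _ _
  let t : ℕ → ℕ := fun m => (st m).1.1
  let U : ℕ → ℕ → ℝ := fun m => (st m).1.2
  have ht1 : ∀ m, 1 ≤ t m := fun m => (st m).2
  have htsucc : ∀ m, t (m + 1) = t m + L (t m) (ht1 m) (U m) := fun m => by
    simp only [t, hst, next, U]
  have hUsucc : ∀ m, U (m + 1) = W (t m) (ht1 m) (U m) := fun m => by
    simp only [t, hst, next, U]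
  have htmono : StrictMono t := strictMono_nat_of_lt_succ fun m => by
    have := hL1 (t m) (ht1 m) (U m)
    rw [htsucc]
    omega
  have hUagree : ∀ m k, m ≤ k → ∀ i ≤ t m, U k i = U m i := by
    intro m k hmk
    induction k, hmk using Nat.le_induction with
    | base => exact fun _ _ => rfl
    | succ k hmk ih =>
      intro i hi
      rw [hUsucc, hWV _ _ _ i (hi.trans (htmono.monotone hmk)), ih i hi]
  let V : ℕ → ℝ := fun i => U i i
  have hV : ∀ m, ∀ i ≤ t m, V i = U m i := by
    intro m i hi
    rcases le_total i m with him | him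
    · exact (hUagree i m him i (htmono.id_le i)).symm
    · exact hUagree m i him i hi
  have hVbound : ∀ m, ∀ i ≤ t m, |U m i| ≤ h i / (1 + (i : ℝ)) := by
    intro m
    induction m with
    | zero =>
      intro i _
      have := hpos i
      simp only [U, st, Function.iterate_zero, id, abs_zero]
      positivity
    | succ m ih =>
      intro i hi
      by_cases him : i ≤ t m
      · rw [hUagree m (m + 1) (by omega) i him]
        exact ih i him
      · rw [hUsucc]
        exact hWh _ _ _ i (by omega) (by rwa [htsucc] at hi)
  refine ⟨V, t, fun n => ?_, htmono, fun m => ⟨ht1 m, ?_, ?_⟩⟩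
  · rw [hV n n (htmono.id_le n)]
    exact hVbound n n (htmono.id_le n)
  · have := hLn (t m) (ht1 m) (U m)
    rw [htsucc]
    omega
  · have h1 : t (m + 1) - t m = L (t m) (ht1 m) (U m) := by rw [htsucc]; omega
    rw [h1]
    refine (hW (t m) (ht1 m) (U m)).congr fun i hi => ?_
    rw [← hUsucc]
    exact (hV (m + 1) i (by rwa [htsucc])).symm

/-- If all late windows are decay windows for `e`, then the solution at `e` is square summable. -/
lemma summable_sq_sol {V : ℕ → ℝ} {t : ℕ → ℕ} {φ : ℝ → ℝ} {σ : ℕ → Finset ℝ} {e : ℝ}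
    (he : e ∈ Set.Ioo (-2 : ℝ) 2) (hmono : StrictMono t)
    (ht : ∀ m, 1 ≤ t m ∧ t (m + 1) ≤ 2 * t m ∧
      IsDecayWindow φ (σ (t m)) V (t m) (t (m + 1) - t m))
    (heσ : ∀ᶠ n in atTop, e ∈ σ n) :
    Summable fun n => sol V (φ e) e n ^ 2 := by
  have hneg : -e ∈ Set.Ioo (-2 : ℝ) 2 := ⟨by linarith [he.2], by linarith [he.1]⟩
  obtain ⟨M, hM⟩ := eventually_atTop.mp (hmono.tendsto_atTop.eventually heσ)
  have hs := tau_im_pos he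
  let G : ℕ → ℝ := fun n => lyap (solAmp V φ e n) (solAmp V φ (-e) n)
  set C : ℝ := G (t M) * (t M : ℝ) ^ 2 with hC
  have hG : ∀ m, M ≤ m → G (t m) * (t m : ℝ) ^ 2 ≤ C := by
    intro m hm
    induction m, hm using Nat.le_induction with
    | base => exact le_rfl
    | succ m hm ih =>
      have h1 := ((ht m).2.2 e (hM m hm)).1
      rw [Nat.add_sub_cancel' (hmono.monotone (Nat.le_succ m))] at h1
      exact h1.trans ih
  have hbound : ∀ n, t M ≤ n → sol V (φ e) e n ^ 2 ≤ 32 * C / (tau e).im ^ 2 * (1 / (n : ℝ) ^ 2) := by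
    intro n hn
    obtain ⟨m, hMm, hmn, hnm⟩ : ∃ m, M ≤ m ∧ t m ≤ n ∧ n < t (m + 1) := by
      have hex : ∃ k, n < t k := ⟨n + 1, hmono.id_le (n + 1)⟩
      have hk := Nat.find_spec hex
      have hMk : M < Nat.find hex := hmono.lt_iff_lt.mp (hn.trans_lt hk)
      refine ⟨Nat.find hex - 1, by omega, ?_, ?_⟩
      · exact not_lt.mp (Nat.find_min hex (by omega))
      · rwa [Nat.sub_add_cancel (by omega)]
    have h1 := ((ht m).2.2 e (hM m hMm)).2 (n - t m) (by omega)
    rw [Nat.add_sub_cancel' hmn] at h1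
    have h2 : ‖solAmp V φ e (t m)‖ ^ 2 ≤ 2 * G (t m) :=
      sq_norm_le_lyap (solAmp_ne_zero V φ hneg (t m))
    have h3 := abs_mul_le_norm_amp (u := sol V (φ e) e) he n
    have hn2 : (n : ℝ) ≤ 2 * t m := by exact_mod_cast hnm.le.trans (ht m).2.1
    have hn0 : (0 : ℝ) < n := by exact_mod_cast ((ht m).1.trans hmn)
    have h4 : sol V (φ e) e n ^ 2 * (tau e).im ^ 2 ≤ 8 * G (t m) := by
      calc sol V (φ e) e n ^ 2 * (tau e).im ^ 2 = (|sol V (φ e) e n| * (tau e).im) ^ 2 := by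
            rw [mul_pow, sq_abs]
        _ ≤ (2 * ‖solAmp V φ e (t m)‖) ^ 2 :=
            pow_le_pow_left₀ (by positivity) (h3.trans h1) 2
        _ ≤ _ := by linarith
    rw [div_mul_div_comm, mul_one, le_div_iff₀ (by positivity)]
    calc sol V (φ e) e n ^ 2 * ((tau e).im ^ 2 * (n : ℝ) ^ 2)
        = sol V (φ e) e n ^ 2 * (tau e).im ^ 2 * (n : ℝ) ^ 2 := by ring
      _ ≤ 8 * G (t m) * (2 * t m) ^ 2 := by
          have := lyap_nonneg (solAmp V φ e (t m)) (solAmp V φ (-e) (t m))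
          gcongr
      _ = 32 * (G (t m) * (t m : ℝ) ^ 2) := by ring
      _ ≤ 32 * C := by linarith [hG m hMm]
  refine (summable_nat_add_iff (t M)).mp ?_
  have hsum : Summable fun n : ℕ => 32 * C / (tau e).im ^ 2 * (1 / (n : ℝ) ^ 2) :=
    (Real.summable_one_div_nat_pow.mpr one_lt_two).mul_left _
  exact Summable.of_nonneg_of_le (fun n => sq_nonneg _) (fun n => hbound _ (Nat.le_add_left _ _))
    ((summable_nat_add_iff (t M)).mpr hsum)

end

end EmbeddedEigenvalues


/-- Theorem 2: for any countable set of distinct energies in `(-2,2)`, any boundary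
phases, and any non-decreasing positive `h` tending to infinity, there is a potential
`V` with `|V(n)| ≤ h(n)/(1+n)` such that each `E j` is an eigenvalue of `Δ + V` with
the prescribed boundary condition. -/
theorem countably_many_embedded_eigenvalues (E θ : ℕ → ℝ) (h : ℕ → ℝ)
    (hE : ∀ j, E j ∈ Set.Ioo (-2 : ℝ) 2)
    (hEinj : Function.Injective E)
    (hθ : ∀ j, θ j ∈ Set.Ico (0 : ℝ) Real.pi)
    (hpos : ∀ n, 0 < h n) (hmono : Monotone h)
    (htend : Filter.Tendsto h Filter.atTop Filter.atTop) :
    ∃ V : ℕ → ℝ, (∀ n : ℕ, |V n| ≤ h n / (1 + (n : ℝ))) ∧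
      ∀ j : ℕ, ∃ u : ℕ → ℝ, u ≠ 0 ∧ Summable (fun n => (u n) ^ 2) ∧
        (∀ n : ℕ, 1 ≤ n → u (n + 1) + u (n - 1) + V n * u n = E j * u n) ∧
        u 1 * Real.cos (θ j) = u 0 * Real.sin (θ j) := by
  classical
  let φ : ℝ → ℝ := fun e => if h : ∃ j, E j = e then θ h.choose else 0
  have hφ : ∀ j, φ (E j) = θ j := by
    intro j
    have hex : ∃ i, E i = E j := ⟨j, rfl⟩
    simp only [φ]
    rw [dif_pos hex, hEinj hex.choose_spec]
  let S : ℕ → Finset ℝ := fun N =>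
    (Finset.range N).image E ∪ (Finset.range N).image fun j => -E j
  have hS : ∀ N, ∀ e ∈ S N, e ∈ Set.Ioo (-2 : ℝ) 2 := by
    intro N e he
    simp only [S, Finset.mem_union, Finset.mem_image] at he
    rcases he with ⟨j, -, rfl⟩ | ⟨j, -, rfl⟩
    · exact hE j
    · exact ⟨by linarith [(hE j).2], by linarith [(hE j).1]⟩
  have hneg : ∀ N, ∀ e ∈ S N, -e ∈ S N := by
    intro N e he
    simp only [S, Finset.mem_union, Finset.mem_image] at he ⊢
    rcases he with ⟨j, hj, rfl⟩ | ⟨j, hj, rfl⟩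
    · exact Or.inr ⟨j, hj, rfl⟩
    · exact Or.inl ⟨j, hj, (neg_neg _).symm⟩
  obtain ⟨σ, hσ, hσS⟩ := EmbeddedEigenvalues.exists_slow_schedule
    (P := EmbeddedEigenvalues.HasDecayWindow h φ) S
    (fun n hn => EmbeddedEigenvalues.hasDecayWindow_empty hpos φ hn)
    (fun N => EmbeddedEigenvalues.eventually_hasDecayWindow hmono htend φ (S N) (hS N) (hneg N))
  obtain ⟨V, t, hV, hmono_t, ht⟩ := EmbeddedEigenvalues.exists_potential hpos hσ
  refine ⟨V, hV, fun j => ⟨EmbeddedEigenvalues.sol V (φ (E j)) (E j), ?_, ?_, ?_, ?_⟩⟩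
  · intro h0
    exact EmbeddedEigenvalues.sol_ne_zero V (φ (E j)) (E j) 0 ⟨congrFun h0 0, congrFun h0 1⟩
  · refine EmbeddedEigenvalues.summable_sq_sol (hE j) hmono_t ht ?_
    filter_upwards [hσS (j + 1)] with n hn
    obtain ⟨M, hM, hσM⟩ := hn
    rw [hσM]
    exact Finset.mem_union_left _ (Finset.mem_image_of_mem E (Finset.mem_range.mpr hM))
  · intro n hn
    obtain ⟨k, rfl⟩ := Nat.exists_eq_add_of_le' hn
    simp only [EmbeddedEigenvalues.sol, Nat.add_sub_cancel]
    ring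
  · rw [hφ]
    simp only [EmbeddedEigenvalues.sol]
    ring
end

section
/- Let E = 0, so k = 1/2 and sin(πk) = 1. Fix b ∈ ℕ and K₁ > 0, and let θ : {n ≥ n₀} → ℝ solve cot(πθ(n+1) - π/2) = cot(πθ(n)) - V(n), where V(n) = K₁·(sin(2πθ(n)) + 100)/(n-b). Let R(n) be the Prüfer radius for energy 0 of the corresponding solution. Then there exists C > 0 (depending on K₁) such that for all n with n - b ≥ C: (i) |ln R(n+2)² - ln R(n)² + (K₁/(n-b))·(1 - cos(4πθ(n)))| ≤ C/(n-b)², and (ii) |θ(n+2) - θ(n) - 1 - (K₁/(π(n-b)))·(100 - (1/2)·sin(4πθ(n)))| ≤ C/(n-b)². -/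
noncomputable section

/-- `u` solves the eigen-equation `u(n+1) + u(n-1) + V(n)u(n) = E·u(n)` for all `n ≥ 1`. -/
def EigenEq (V : ℕ → ℝ) (E : ℝ) (u : ℕ → ℝ) : Prop :=
  ∀ n : ℕ, 1 ≤ n → u (n + 1) + u (n - 1) + V n * u n = E * u n

/-- `(R, θ)` are modified Prüfer variables (radius and angle) of the solution `u`,
with quasimomentum `k`: `u(n-1) = R(n)·sin(πθ(n) - πk)` and
`(u(n) - cos(πk)·u(n-1))/sin(πk) = R(n)·cos(πθ(n) - πk)`, with `R(n) > 0`. -/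
def PruferRel (k : ℝ) (u R θ : ℕ → ℝ) : Prop :=
  ∀ n : ℕ, 1 ≤ n → 0 < R n ∧
    u (n - 1) = R n * Real.sin (Real.pi * θ n - Real.pi * k) ∧
    (u n - Real.cos (Real.pi * k) * u (n - 1)) / Real.sin (Real.pi * k)
      = R n * Real.cos (Real.pi * θ n - Real.pi * k)

/-- The Prüfer angle is chosen along the continuous branch:
`θ(n+1) - θ(n) - k ∈ (-1/2, 1/2)`. -/
def BranchCond (k : ℝ) (θ : ℕ → ℝ) : Prop :=
  ∀ n : ℕ, 1 ≤ n → |θ (n + 1) - θ n - k| < 1 / 2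

section Real

open Real

lemma abs_log_one_add_sub_self_le {t : ℝ} (ht : |t| ≤ 1 / 2) :
    |log (1 + t) - t| ≤ 2 * t ^ 2 := by
  obtain ⟨h₁, h₂⟩ := abs_le.mp ht
  have hpos : 0 < 1 + t := by linarith
  have hup := log_le_sub_one_of_pos hpos
  have hlow := one_sub_inv_le_log_of_pos hpos
  have hkey : t - 2 * t ^ 2 ≤ 1 - (1 + t)⁻¹ := by
    have : 1 - (1 + t)⁻¹ - (t - 2 * t ^ 2) = t ^ 2 * (1 + 2 * t) / (1 + t) := by
      field_simp
      ring
    have : 0 ≤ t ^ 2 * (1 + 2 * t) / (1 + t) :=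
      div_nonneg (mul_nonneg (sq_nonneg t) (by linarith)) hpos.le
    linarith
  rw [abs_le]
  constructor <;> nlinarith [sq_nonneg t]

/-- The recursion for the Prüfer variables at energy `0`, in polar form. -/
lemma PruferRel.zero_energy_step {V u R θ : ℕ → ℝ} (hu : EigenEq V 0 u)
    (hP : PruferRel (1 / 2) u R θ) {n : ℕ} (hn : 1 ≤ n) :
    R (n + 1) * sin (π * (θ (n + 1) - θ n - 1 / 2)) = R n * (V n * sin (π * θ n) ^ 2) ∧
      R (n + 1) * cos (π * (θ (n + 1) - θ n - 1 / 2))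
        = R n * (1 - V n * (sin (π * θ n) * cos (π * θ n))) := by
  obtain ⟨-, h₁, h₂⟩ := hP n hn
  obtain ⟨-, h₃, h₄⟩ := hP (n + 1) (by lia)
  have hE := hu n hn
  have hhalf : π * (1 / 2) = π / 2 := by ring
  simp only [hhalf, cos_pi_div_two, sin_pi_div_two, sin_sub_pi_div_two, cos_sub_pi_div_two,
    zero_mul, sub_zero, div_one, Nat.add_sub_cancel] at h₁ h₂ h₃ h₄ hE
  have hδ : π * (θ (n + 1) - θ n - 1 / 2) = π * θ (n + 1) - π * θ n - π / 2 := by ring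
  have hsc := sin_sq_add_cos_sq (π * θ n)
  rw [hδ, sin_sub_pi_div_two, cos_sub_pi_div_two, sin_sub, cos_sub]
  rw [h₁, h₂, h₄] at hE
  rw [h₂] at h₃
  constructor
  · linear_combination -cos (π * θ n) * h₃ - sin (π * θ n) * hE
  · linear_combination cos (π * θ n) * hE - sin (π * θ n) * h₃ + R n * hsc

lemma abs_angle_increment_le {r r' v x δ : ℝ} (hr : 0 < r) (hv : |v| ≤ 1 / 10)
    (hδ : |δ| < π / 2) (hsin : r' * sin δ = r * (v * sin x ^ 2))
    (hcos : r' * cos δ = r * (1 - v * (sin x * cos x))) :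
    |δ| ≤ 2 * |v| ∧ |δ - v * sin x ^ 2| ≤ 6 * v ^ 2 := by
  have hS : sin x ^ 2 ≤ 1 := sin_sq_le_one x
  have hSC : |sin x * cos x| ≤ 1 := by
    rw [abs_mul]
    exact mul_le_one₀ (abs_sin_le_one x) (abs_nonneg _) (abs_cos_le_one x)
  have htan : sin δ * (1 - v * (sin x * cos x)) = v * sin x ^ 2 * cos δ := by
    apply mul_left_cancel₀ hr.ne'
    linear_combination cos δ * hsin - sin δ * hcos
  have hvS : |v * sin x ^ 2| ≤ |v| := by
    rw [abs_mul, abs_of_nonneg (sq_nonneg (sin x))]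
    exact mul_le_of_le_one_right (abs_nonneg v) hS
  have hvSC : |v * (sin x * cos x)| ≤ |v| := by
    rw [abs_mul]
    exact mul_le_of_le_one_right (abs_nonneg v) hSC
  have hsinδ : |sin δ| * (9 / 10) ≤ |v| := by
    have h₁ : |sin δ| * |1 - v * (sin x * cos x)| ≤ |v| := by
      rw [← abs_mul, htan, abs_mul]
      exact (mul_le_of_le_one_right (abs_nonneg _) (abs_cos_le_one δ)).trans hvS
    have h₂ : 9 / 10 ≤ |1 - v * (sin x * cos x)| :=
      le_trans (by linarith [(abs_le.mp hvSC).2]) (le_abs_self _)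
    exact (mul_le_mul_of_nonneg_left h₂ (abs_nonneg _)).trans h₁
  have hδv : |δ| ≤ 2 * |v| := by
    have h := mul_abs_le_abs_sin hδ.le
    have hπ : 5 / 9 ≤ 2 / π := by
      rw [le_div_iff₀ pi_pos]
      linarith [pi_lt_d2]
    nlinarith [abs_nonneg δ]
  refine ⟨hδv, ?_⟩
  have hδsq : δ ^ 2 ≤ 4 * v ^ 2 := by
    rw [← sq_abs δ, ← sq_abs v]
    nlinarith [abs_nonneg δ]
  have hsinsub : |δ - sin δ| ≤ v ^ 2 := by
    have h₁ : |δ| ≤ 1 := by linarith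
    have h₂ := sin_bound h₁
    have h₃ : |δ - sin δ| ≤ |δ| ^ 5 / 100 + |δ| ^ 3 / 6 := by
      have : δ - sin δ = -(sin δ - (δ - δ ^ 3 / 6)) + δ ^ 3 / 6 := by ring
      rw [this]
      refine (abs_add_le _ _).trans ?_
      rw [abs_neg, abs_div, abs_pow, abs_of_pos (by norm_num : (0 : ℝ) < 6)]
      gcongr
    have h₅ : |δ| ^ 2 ≤ 4 * v ^ 2 := by rwa [sq_abs]
    have h₄ : |δ| ^ 5 / 100 + |δ| ^ 3 / 6 ≤ |δ| ^ 2 * (1 / 4) := by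
      have h₆ : |δ| ^ 3 ≤ |δ| ^ 2 := pow_le_pow_of_le_one (abs_nonneg δ) h₁ (by norm_num)
      have h₇ : |δ| ^ 5 ≤ |δ| ^ 2 := pow_le_pow_of_le_one (abs_nonneg δ) h₁ (by norm_num)
      linarith [sq_nonneg |δ|]
    linarith
  have hcosTerm : |v * sin x ^ 2 * (1 - cos δ)| ≤ 2 * v ^ 2 := by
    have h₁ : 0 ≤ 1 - cos δ := by linarith [cos_le_one δ]
    have h₂ : 1 - cos δ ≤ 2 * v ^ 2 := by linarith [one_sub_sq_div_two_le_cos (x := δ)]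
    rw [abs_mul, abs_of_nonneg h₁]
    nlinarith [abs_nonneg (v * sin x ^ 2)]
  have hsinTerm : |v * (sin x * cos x) * sin δ| ≤ 2 * v ^ 2 := by
    rw [abs_mul, ← sq_abs v]
    nlinarith [abs_nonneg (v * (sin x * cos x)), abs_nonneg (sin δ), abs_nonneg v]
  have hsplit : δ - v * sin x ^ 2
      = (δ - sin δ) + (v * (sin x * cos x) * sin δ - v * sin x ^ 2 * (1 - cos δ)) := by
    linear_combination htan
  rw [hsplit]
  refine (abs_add_le _ _).trans ?_
  linarith [abs_sub (v * (sin x * cos x) * sin δ) (v * sin x ^ 2 * (1 - cos δ)), sq_nonneg v]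

lemma abs_log_radius_increment_le {r r' v x δ : ℝ} (hr : 0 < r) (hv : |v| ≤ 1 / 10)
    (hsin : r' * sin δ = r * (v * sin x ^ 2))
    (hcos : r' * cos δ = r * (1 - v * (sin x * cos x))) :
    |log (r' ^ 2) - log (r ^ 2) + v * sin (2 * x)| ≤ 4 * v ^ 2 := by
  set t := -(v * sin (2 * x)) + v ^ 2 * sin x ^ 2 with ht
  have hr' : r' ^ 2 = r ^ 2 * (1 + t) := by
    rw [ht, sin_two_mul]
    linear_combination (r' * sin δ + r * (v * sin x ^ 2)) * hsin
      + (r' * cos δ + r * (1 - v * (sin x * cos x))) * hcos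
      - r' ^ 2 * sin_sq_add_cos_sq δ + r ^ 2 * v ^ 2 * sin x ^ 2 * sin_sq_add_cos_sq x
  have h₁ : |v * sin (2 * x)| ≤ |v| := by
    rw [abs_mul]
    exact mul_le_of_le_one_right (abs_nonneg v) (abs_sin_le_one _)
  have h₂ : |v ^ 2 * sin x ^ 2| ≤ v ^ 2 := by
    rw [abs_of_nonneg (by positivity)]
    exact mul_le_of_le_one_right (sq_nonneg v) (sin_sq_le_one x)
  have hsq : v ^ 2 ≤ 1 / 10 * |v| := by
    rw [← sq_abs]
    nlinarith [abs_nonneg v]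
  have htv : |t| ≤ 11 / 10 * |v| := by
    refine (abs_add_le _ _).trans ?_
    rw [abs_neg]
    linarith
  have htsq : t ^ 2 ≤ 121 / 100 * v ^ 2 := by
    rw [← sq_abs t, ← sq_abs v]
    nlinarith [abs_nonneg t]
  have ht₁ : |t| ≤ 1 / 2 := by linarith
  have hlog := abs_log_one_add_sub_self_le ht₁
  have hsplit : log (r' ^ 2) - log (r ^ 2) + v * sin (2 * x)
      = (log (1 + t) - t) + v ^ 2 * sin x ^ 2 := by
    rw [hr', log_mul (by positivity) (by linarith [(abs_le.mp ht₁).1]), ht]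
    ring
  rw [hsplit]
  refine (abs_add_le _ _).trans ?_
  linarith [sq_nonneg v]

lemma abs_mul_add_hundred_div_le {K N M s : ℝ} (hK : 0 < K) (hN : 0 < N) (hNM : N ≤ M)
    (hs : |s| ≤ 1) : |K * (s + 100) / M| ≤ 101 * (K / N) := by
  obtain ⟨h₁, h₂⟩ := abs_le.mp hs
  have hM : 0 < M := hN.trans_le hNM
  have hnum : 0 ≤ K * (s + 100) := mul_nonneg hK.le (by linarith)
  rw [abs_of_nonneg (div_nonneg hnum hM.le), ← mul_div_assoc, mul_comm 101 K]
  gcongr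
  linarith

lemma resonant_pair_bounds {K N x δ v₁ v₂ : ℝ} (hK : 0 < K) (hN : 0 < N)
    (hv₁ : v₁ = K * (sin (2 * x) + 100) / N)
    (hv₂ : v₂ = K * (100 - sin (2 * (x + δ))) / (N + 1)) (hδ : |δ| ≤ 2 * |v₁|) :
    |v₁ * sin (2 * x) - v₂ * sin (2 * (x + δ)) - K / N * (1 - cos (4 * x))|
        ≤ 41208 * (K / N) ^ 2 + 101 * (K / N) * (1 / N) ∧
      |v₁ * sin x ^ 2 + v₂ * cos (x + δ) ^ 2 - K / N * (100 - 1 / 2 * sin (4 * x))|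
        ≤ 41208 * (K / N) ^ 2 + 101 * (K / N) * (1 / N) := by
  set s := sin (2 * x) with hs
  set s' := sin (2 * (x + δ)) with hs'
  set κ := K / N with hκ
  set η := 1 / N with hη
  have hκ₀ : 0 < κ := by positivity
  have hη₀ : 0 < η := by positivity
  have hs₁ := abs_le.mp (abs_sin_le_one (2 * x))
  have hs₁' := abs_sin_le_one (2 * (x + δ))
  rw [← hs] at hs₁
  rw [← hs'] at hs₁'
  have hv₁κ : v₁ = κ * (s + 100) := by rw [hv₁, hκ]; ring
  have hδκ : |δ| ≤ 202 * κ := by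
    have hv₁₀ : 0 ≤ κ * (s + 100) := mul_nonneg hκ₀.le (by linarith)
    rw [hv₁κ, abs_of_nonneg hv₁₀] at hδ
    nlinarith
  have hss : |s' - s| ≤ 404 * κ := by
    have h := abs_sin_sub_sin_le (2 * (x + δ)) (2 * x)
    rw [← hs, ← hs', show 2 * (x + δ) - 2 * x = 2 * δ by ring, abs_mul, abs_two] at h
    linarith
  have hcc : |cos (x + δ) ^ 2 - cos x ^ 2| ≤ 202 * κ := by
    have h : cos (x + δ) ^ 2 - cos x ^ 2 = -(sin (2 * x + δ) * sin δ) := by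
      rw [show 2 * x + δ = x + (x + δ) by ring, sin_add x (x + δ), sin_add x δ, cos_add x δ]
      linear_combination (cos x ^ 2) * sin_sq_add_cos_sq δ
    rw [h, abs_neg, abs_mul]
    exact (mul_le_of_le_one_left (abs_nonneg _) (abs_sin_le_one _)).trans
      (abs_sin_le_abs.trans hδκ)
  set w := κ * (100 - s) with hw
  have hw₀ : 0 ≤ w := mul_nonneg hκ₀.le (by linarith)
  have hwκ : w ≤ 101 * κ := by rw [hw]; nlinarith
  have hvw : |v₂ - w| ≤ 404 * κ ^ 2 + 101 * κ * η := by
    have h : v₂ - w = N / (N + 1) * (κ * (s - s') - w * η) := by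
      rw [hv₂, hw, hκ, hη]
      field_simp
      ring
    have hq : |N / (N + 1)| ≤ 1 := by
      rw [abs_of_pos (by positivity), div_le_one (by positivity)]
      linarith
    rw [h, abs_mul]
    refine (mul_le_of_le_one_left (abs_nonneg _) hq).trans ?_
    refine (abs_sub _ _).trans ?_
    rw [abs_mul, abs_of_pos hκ₀, abs_sub_comm s s', abs_of_nonneg (mul_nonneg hw₀ hη₀.le)]
    nlinarith
  have hcos4 : cos (4 * x) = 1 - 2 * s ^ 2 := by
    rw [show 4 * x = 2 * (2 * x) by ring, cos_two_mul, hs]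
    linarith [sin_sq_add_cos_sq (2 * x)]
  have hsin4 : sin (4 * x) = 2 * s * (2 * cos x ^ 2 - 1) := by
    rw [show 4 * x = 2 * (2 * x) by ring, sin_two_mul, cos_two_mul]
  constructor
  · have h : v₁ * s - v₂ * s' - κ * (1 - cos (4 * x))
        = -((v₂ - w) * s') - w * (s' - s) := by
      rw [hcos4, hv₁κ, hw]
      ring
    rw [h]
    refine (abs_sub _ _).trans ?_
    rw [abs_neg, abs_mul, abs_mul, abs_of_nonneg hw₀]
    have h₁ := mul_le_of_le_one_right (abs_nonneg (v₂ - w)) hs₁'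
    have h₂ : w * |s' - s| ≤ 101 * κ * (404 * κ) := by gcongr
    linarith
  · have h : v₁ * sin x ^ 2 + v₂ * cos (x + δ) ^ 2 - κ * (100 - 1 / 2 * sin (4 * x))
        = (v₂ - w) * cos (x + δ) ^ 2 + w * (cos (x + δ) ^ 2 - cos x ^ 2) := by
      rw [hsin4, hv₁κ, hw]
      linear_combination κ * (s + 100) * sin_sq_add_cos_sq x
    rw [h]
    refine (abs_add_le _ _).trans ?_
    rw [abs_mul, abs_mul, abs_of_nonneg hw₀, abs_of_nonneg (sq_nonneg (cos (x + δ)))]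
    have h₁ := mul_le_of_le_one_right (abs_nonneg (v₂ - w)) (cos_sq_le_one (x + δ))
    have h₂ : w * |cos (x + δ) ^ 2 - cos x ^ 2| ≤ 101 * κ * (202 * κ) := by gcongr
    nlinarith [sq_nonneg κ]

end Real

/-- The self-resonant case `E = 0` (`k = 1/2`, `sin πk = 1`): with the generating
function `V(n) = K₁(sin 2πθ(n) + 100)/(n-b)`, the Prüfer variables at energy `0`
satisfy, for `n - b` large,
(i) `ln R(n+2)² = ln R(n)² - (K₁/(n-b))(1 - cos 4πθ(n)) + O(1/(n-b)²)` and
(ii) `θ(n+2) = θ(n) + 1 + (K₁/(π(n-b)))(100 - (1/2)sin 4πθ(n)) + O(1/(n-b)²)`. -/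
theorem zero_energy_block_expansion (b : ℕ) (K₁ : ℝ) (hK₁ : 0 < K₁) :
    ∃ C : ℝ, 0 < C ∧
      ∀ (n₀ : ℕ) (V θ u R : ℕ → ℝ),
        (∀ n : ℕ, n₀ ≤ n → V n
            = K₁ * (Real.sin (2 * Real.pi * θ n) + 100) / ((n : ℝ) - (b : ℝ))) →
        (∀ n : ℕ, n₀ ≤ n →
          Real.cot (Real.pi * θ (n + 1) - Real.pi / 2)
              = Real.cot (Real.pi * θ n) - V n ∧
            |θ (n + 1) - θ n - 1 / 2| < 1 / 2) →
        u ≠ 0 → EigenEq V 0 u → PruferRel (1 / 2) u R θ →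
        ∀ n : ℕ, n₀ ≤ n → (n : ℝ) - (b : ℝ) ≥ C →
          |Real.log ((R (n + 2)) ^ 2) - Real.log ((R n) ^ 2)
              + K₁ / ((n : ℝ) - (b : ℝ)) * (1 - Real.cos (4 * Real.pi * θ n))|
            ≤ C / ((n : ℝ) - (b : ℝ)) ^ 2 ∧
          |θ (n + 2) - θ n - 1
              - K₁ / (Real.pi * ((n : ℝ) - (b : ℝ)))
                * (100 - (1 / 2) * Real.sin (4 * Real.pi * θ n))|
            ≤ C / ((n : ℝ) - (b : ℝ)) ^ 2 := by
  refine ⟨10 ^ 6 * (K₁ + 1) ^ 2, by positivity, ?_⟩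
  intro n₀ V θ u R hV hθ _ hE hP n hn hC
  have hcast : ((n + 1 : ℕ) : ℝ) - b = (n : ℝ) - b + 1 := by
    push_cast
    ring
  have hV₁ := hV n hn
  have hV₂ := hV (n + 1) (by lia)
  have hθ₁ := (hθ n hn).2
  have hθ₂ := (hθ (n + 1) (by lia)).2
  rw [hcast] at hV₂
  have hbn : (0 : ℝ) ≤ b := b.cast_nonneg
  set N : ℝ := (n : ℝ) - b with hNdef
  have hN : 0 < N := lt_of_lt_of_le (by positivity) hC
  have hn₁ : 1 ≤ n := by
    have : (0 : ℝ) < n := by linarith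
    exact_mod_cast this
  obtain ⟨hsin₁, hcos₁⟩ := hP.zero_energy_step hE hn₁
  obtain ⟨hsin₂, hcos₂⟩ := hP.zero_energy_step hE (n := n + 1) (by lia)
  have hR₁ := (hP n hn₁).1
  have hR₂ := (hP (n + 1) (by lia)).1
  set x := Real.pi * θ n with hx
  set δ₁ := Real.pi * (θ (n + 1) - θ n - 1 / 2) with hδ₁
  set δ₂ := Real.pi * (θ (n + 1 + 1) - θ (n + 1) - 1 / 2) with hδ₂
  have hx' : Real.pi * θ (n + 1) = x + δ₁ + Real.pi / 2 := by rw [hδ₁, hx]; ring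
  have hlt₁ : |δ₁| < Real.pi / 2 := by
    rw [hδ₁, abs_mul, abs_of_pos Real.pi_pos]
    nlinarith [Real.pi_pos]
  have hlt₂ : |δ₂| < Real.pi / 2 := by
    rw [hδ₂, abs_mul, abs_of_pos Real.pi_pos]
    nlinarith [Real.pi_pos]
  have hsin' : Real.sin (2 * (x + δ₁ + Real.pi / 2)) = -Real.sin (2 * (x + δ₁)) := by
    rw [← Real.sin_add_pi]
    ring_nf
  rw [mul_assoc, ← hx] at hV₁
  rw [mul_assoc, hx', hsin', neg_add_eq_sub] at hV₂
  rw [hx'] at hsin₂ hcos₂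
  set κ := K₁ / N with hκ
  have hκ₀ : 0 < κ := by positivity
  have hκ₁ : 101 * κ ≤ 1 / 10 := by
    have : κ ≤ 1 / 1010 := by
      rw [hκ, div_le_iff₀ hN]
      nlinarith
    linarith
  have hv₁ : |V n| ≤ 101 * κ := by
    rw [hV₁]
    exact abs_mul_add_hundred_div_le hK₁ hN le_rfl (Real.abs_sin_le_one _)
  have hv₂ : |V (n + 1)| ≤ 101 * κ := by
    rw [hV₂, sub_eq_neg_add]
    refine abs_mul_add_hundred_div_le hK₁ hN (by linarith) ?_
    rw [abs_neg]
    exact Real.abs_sin_le_one _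
  have hsq₁ : V n ^ 2 ≤ (101 * κ) ^ 2 := by
    rw [← sq_abs]
    gcongr
  have hsq₂ : V (n + 1) ^ 2 ≤ (101 * κ) ^ 2 := by
    rw [← sq_abs]
    gcongr
  obtain ⟨hδv, hang₁⟩ := abs_angle_increment_le hR₁ (hv₁.trans hκ₁) hlt₁ hsin₁ hcos₁
  obtain ⟨-, hang₂⟩ := abs_angle_increment_le hR₂ (hv₂.trans hκ₁) hlt₂ hsin₂ hcos₂
  have hlog₁ := abs_log_radius_increment_le hR₁ (hv₁.trans hκ₁) hsin₁ hcos₁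
  have hlog₂ := abs_log_radius_increment_le hR₂ (hv₂.trans hκ₁) hsin₂ hcos₂
  obtain ⟨hA, hB⟩ := resonant_pair_bounds hK₁ hN hV₁ hV₂ hδv
  rw [hsin'] at hlog₂
  rw [Real.sin_add_pi_div_two] at hang₂
  rw [← hκ] at hA hB
  have hη₀ : 0 < 1 / N := by positivity
  have hCN : 10 ^ 6 * (K₁ + 1) ^ 2 / N ^ 2 = 10 ^ 6 * (κ + 1 / N) ^ 2 := by
    rw [hκ]
    field_simp
  have hx4 : 4 * Real.pi * θ n = 4 * x := by rw [hx]; ring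
  rw [hCN, hx4]
  have hprod : 0 < κ * (1 / N) := by positivity
  have hfinal : 12 * (101 * κ) ^ 2 + (41208 * κ ^ 2 + 101 * κ * (1 / N))
      ≤ 10 ^ 6 * (κ + 1 / N) ^ 2 := by
    linarith [sq_nonneg (1 / N), sq_nonneg κ, add_sq κ (1 / N)]
  rw [abs_le] at hlog₁ hlog₂ hang₁ hang₂ hA hB
  constructor
  · rw [abs_le]
    constructor <;> linarith [hlog₁.1, hlog₁.2, hlog₂.1, hlog₂.2, hA.1, hA.2, sq_nonneg κ]
  · have hscale : θ (n + 2) - θ n - 1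
          - K₁ / (Real.pi * N) * (100 - 1 / 2 * Real.sin (4 * x))
        = (δ₁ + δ₂ - κ * (100 - 1 / 2 * Real.sin (4 * x))) / Real.pi := by
      rw [hδ₁, hδ₂, hκ]
      field_simp
      ring
    rw [hscale, abs_div, abs_of_pos Real.pi_pos]
    refine (div_le_self (abs_nonneg _) (by linarith [Real.pi_gt_three])).trans ?_
    rw [abs_le]
    constructor <;> linarith [hang₁.1, hang₁.2, hang₂.1, hang₂.2, hB.1, hB.2, sq_nonneg κ]
end
end
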